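/- Let l ≥ 1 be an integer and let G be the presented group on four generators s₁, s₂, s₃, s₄ with relators s₁², s₂², s₃², s₄^{2l+1}, s₁s₂s₃s₄ (the fundamental group of the hyperbolic 2-orbifold S²(2,2,2,2l+1)). Then every generating pair of G is Nielsen equivalent to (s₁s₂, s₁s₃). -/

import Mathlib

/-!
Write `B = ⟨s₃, s₄⟩`, a free product of cyclic groups of orders `2` and `2l+1`, and `c = s₁s₂`, so
that `c⁻¹ = s₃s₄ ∈ B`. The group `G` is the amalgamated product of `B` and the infinite dihedral
group `⟨s₁, s₂⟩` over `⟨c⟩`. It therefore acts on a tree whose vertices are the cosets of `B`, with a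
single orbit of edges; `s₁` inverts an edge at the base vertex, and `⟨c⟩` is the pointwise stabiliser
of that edge. The tree is built explicitly from sequences of cosets of `⟨c⟩` in `B`
(`BassSerre.Vert`), and all arguments only use the distances `L g` from the base vertex `v` to `g v`
and the Gromov products `K g h` of `g v` and `h v`. The same construction, applied to the free
product `B` itself, shows that `⟨c⟩` is malnormal in `B`, and this makes `B → G` injective.

A Nielsen class of generating pairs is normalised in three steps.

* *An entry in `B`* (`Sph.exists_base`). If all entries of all pairs of the class are hyperbolic, a
  pair of minimal total length is Nielsen reduced, hence generates a free group acting freely on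
  vertices; but `s₃ ≠ 1` fixes the base vertex. An entry inverting an edge is conjugate to
  `s₁c^i`, which dies in one of the dihedral quotients obtained by killing `s₁` or `s₂`; the quotient
  would then be cyclic. Hence some entry fixes a vertex.
* *An edge pair* (`EdgeTree.exists_edge_pair`, `Sph.exists_edge`). Among the pairs `(f, y)` with
  `f ∈ B` take `y` of minimal length. Unless `f` fixes the first edge towards `y v` or `y⁻¹ v`, the
  group `⟨f, y⟩` is a free product meeting `B` only in `⟨f⟩`. By malnormality a nontrivial element
  fixes no path with two edges, and a length of at least two is excluded in the same way. The
  pair becomes `(c^k, s₁b)` with `b ∈ B ∖ ⟨c⟩`. The Klein four quotient shows that `k` is odd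
  (`Sph.not_even`), and a homomorphism to `PGL₂(ℂ)` killing `c^k` with noncommutative image exists if
  `|k| ≥ 3` (`Sph.not_odd`), so `k = ±1`.
* *The double coset of `b`* (`Sph.double_coset`, `Sph.reaches`). If `b ∉ ⟨c⟩s₃⟨c⟩`, then `c` and
  `b⁻¹cb` freely generate a subgroup `P` of `B` that does not contain `b`, and `⟨c, s₁b⟩` is an HNN
  extension of `P` meeting `B` only in `P`, a contradiction. So `b = c^i s₃ c^j`, and as `s₁` inverts
  `c`, multiplying `s₁b` by powers of `c` on both sides gives `s₁s₃`.
-/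

/-- Nielsen equivalence of pairs of elements of a group. -/
def NielsenEquiv {G : Type*} [Group G] (g h g' h' : G) : Prop :=
  ∃ φ : FreeGroup (Fin 2) ≃* FreeGroup (Fin 2),
    FreeGroup.lift ![g', h'] = (FreeGroup.lift ![g, h]).comp φ.toMonoidHom

/-- Relators of π₁(S²(2,2,2,2l+1)) on generators sᵢ = of (i-1):
the relators are s₁², s₂², s₃², s₄^(2l+1), s₁s₂s₃s₄. -/
def sphRels (l : ℕ) : Set (FreeGroup (Fin 4)) :=
  {FreeGroup.of 0 ^ 2, FreeGroup.of 1 ^ 2, FreeGroup.of 2 ^ 2,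
   FreeGroup.of 3 ^ (2 * l + 1),
   FreeGroup.of 0 * FreeGroup.of 1 * FreeGroup.of 2 * FreeGroup.of 3}


/-! ### Length functions of group actions on trees -/

/-- The numerical data of an action on a tree with base vertex `v`: `L g` is the distance from `v` to
`g v`, and `K g h` is the length of the common initial segment of the geodesics from `v` to `g v` and
to `h v`. -/
structure TreeLength (Γ : Type*) [Group Γ] where
  L : Γ → ℕ
  K : Γ → Γ → ℕ
  len_one : L 1 = 0
  len_inv_mul : ∀ g h, L (g⁻¹ * h) + 2 * K g h = L g + L h
  K_comm : ∀ g h, K g h = K h g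
  K_le_left : ∀ g h, K g h ≤ L g
  ultra : ∀ g h k, min (K g h) (K h k) ≤ K g k

namespace TreeLength

variable {Γ : Type*} [Group Γ] (T : TreeLength Γ)

theorem K_le_right (g h : Γ) : T.K g h ≤ T.L h := by
  rw [T.K_comm]; exact T.K_le_left h g

theorem len_inv (g : Γ) : T.L g⁻¹ = T.L g := by
  have h1 := T.len_inv_mul g 1
  have h2 := T.K_le_right g 1
  rw [T.len_one] at h1 h2
  rw [mul_one] at h1
  omega

theorem len_mul (g h : Γ) : T.L (g * h) + 2 * T.K g⁻¹ h = T.L g + T.L h := by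
  have h1 := T.len_inv_mul g⁻¹ h
  rwa [inv_inv, T.len_inv] at h1

theorem K_self (g : Γ) : T.K g g = T.L g := by
  have h1 := T.len_inv_mul g g
  rw [inv_mul_cancel, T.len_one] at h1
  omega

variable {T} in
theorem len_mul_left {p : Γ} (hp : T.L p = 0) (g : Γ) : T.L (p * g) = T.L g := by
  have h1 := T.len_mul p g
  have h2 := T.K_le_left p⁻¹ g
  rw [T.len_inv] at h2
  omega

variable {T} in
theorem len_mul_right {p : Γ} (hp : T.L p = 0) (g : Γ) : T.L (g * p) = T.L g := by
  have h1 := T.len_mul g p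
  have h2 := T.K_le_right g⁻¹ p
  omega

variable {T} in
theorem K_mul_left {p : Γ} (hp : T.L p = 0) (g h : Γ) : T.K (p * g) (p * h) = T.K g h := by
  have h1 := T.len_inv_mul (p * g) (p * h)
  have h2 := T.len_inv_mul g h
  rw [len_mul_left hp, len_mul_left hp, show (p * g)⁻¹ * (p * h) = g⁻¹ * h by group] at h1
  omega

variable {T} in
theorem K_mul_right {p : Γ} (hp : T.L p = 0) (g h : Γ) : T.K (g * p) h = T.K g h := by
  have h1 := T.len_inv_mul (g * p) h
  have h2 := T.len_inv_mul g h
  rw [len_mul_right hp, show (g * p)⁻¹ * h = p⁻¹ * (g⁻¹ * h) by group,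
    len_mul_left (by rw [T.len_inv, hp])] at h1
  omega

variable {T} in
theorem K_mul_right' {p : Γ} (hp : T.L p = 0) (g h : Γ) : T.K h (g * p) = T.K h g := by
  rw [T.K_comm, K_mul_right hp, T.K_comm]

/-- The stabiliser of the base vertex. -/
def base : Subgroup Γ where
  carrier := {g | T.L g = 0}
  one_mem' := T.len_one
  mul_mem' := by
    intro a b ha hb
    exact (len_mul_left ha b).trans hb
  inv_mem' := by
    intro a ha
    exact (T.len_inv a).trans ha

theorem mem_base {g : Γ} : g ∈ T.base ↔ T.L g = 0 := Iff.rfl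

/-- The group element spelled by a letter. -/
def letter (y : Fin 2 → Γ) (p : Fin 2 × Bool) : Γ := cond p.2 (y p.1) (y p.1)⁻¹

theorem letter_not (y : Fin 2 → Γ) (p : Fin 2 × Bool) :
    letter y (p.1, !p.2) = (letter y p)⁻¹ := by
  rcases p with ⟨i, _ | _⟩ <;> simp [letter]

/-- The cancellation bounds `a p` leave a positive middle part of every letter, so the geodesic to
the image of a reduced word follows its first letter `p` for more than `a p` steps. -/
theorem free_pos_list (y : Fin 2 → Γ) (a : Fin 2 × Bool → ℕ)
    (hK : ∀ p q, p ≠ q → T.K (letter y p) (letter y q) ≤ a p)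
    (ha : ∀ p, a p + a (p.1, !p.2) < T.L (letter y p)) (l : List (Fin 2 × Bool)) :
    ∀ p, FreeGroup.IsReduced (p :: l) →
      a p < T.K (((p :: l).map (letter y)).prod) (letter y p) := by
  induction l with
  | nil =>
    intro p _
    have := ha p
    simp only [List.map_cons, List.map_nil, List.prod_cons, List.prod_nil, mul_one, K_self]
    omega
  | cons q l ih =>
    intro p hp
    unfold FreeGroup.IsReduced at hp ih
    rw [List.isChain_cons_cons] at hp
    have h1 := ih q hp.2
    rw [List.map_cons, List.prod_cons]
    set w := ((q :: l).map (letter y)).prod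
    have hne : (p.1, !p.2) ≠ q := by
      rintro rfl
      simpa using hp.1
    have h2 := hK _ _ hne
    have h3 := hK _ _ hne.symm
    rw [letter_not] at h2 h3
    have h4 := T.ultra (letter y p)⁻¹ w (letter y q)
    have h5 := T.len_mul (letter y p) w
    have h6 := T.len_inv_mul (letter y p * w) (letter y p)
    rw [show (letter y p * w)⁻¹ * letter y p = w⁻¹ by group, T.len_inv] at h6
    have h7 := ha p
    have h8 := T.K_comm (letter y p)⁻¹ (letter y q)
    omega

/-- Nielsen reduced pairs freely generate a group acting freely on the vertices. -/
theorem free_pos (y : Fin 2 → Γ) (a : Fin 2 × Bool → ℕ)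
    (hK : ∀ p q, p ≠ q → T.K (letter y p) (letter y q) ≤ a p)
    (ha : ∀ p, a p + a (p.1, !p.2) < T.L (letter y p)) (w : FreeGroup (Fin 2)) (hw : w ≠ 1) :
    0 < T.L (FreeGroup.lift y w) := by
  have h1 : FreeGroup.lift y w = (w.toWord.map (letter y)).prod := by
    conv_lhs => rw [← FreeGroup.mk_toWord (x := w)]
    rfl
  have h2 := FreeGroup.isReduced_toWord (x := w)
  have h3 : w.toWord ≠ [] := by simpa using hw
  rw [h1]
  obtain ⟨p, l, hpl⟩ := List.exists_cons_of_ne_nil h3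
  rw [hpl] at h2 ⊢
  have h4 := T.free_pos_list y a hK ha l p h2
  have h5 := T.K_le_left (((p :: l).map (letter y)).prod) (letter y p)
  omega

/-- `s` or its inverse. -/
def sgn (s : Γ) (ε : Bool) : Γ := cond ε s s⁻¹

theorem sgn_not (s : Γ) (ε : Bool) : sgn s (!ε) = (sgn s ε)⁻¹ := by
  cases ε <;> simp [sgn]

theorem len_sgn (s : Γ) (ε : Bool) : T.L (sgn s ε) = T.L s := by
  cases ε <;> simp [sgn, T.len_inv]

/-- `Red P s w ε` says that `w` is spelled by a word `s^ε₁ p₁ ⋯ s^εₙ pₙ` with `n ≥ 1`, `pᵢ ∈ P` and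
`ε₁ = ε`, in which no subword `s^δ p s^(-δ)` represents an element of `P`. -/
inductive Red (P : Subgroup Γ) (s : Γ) : Γ → Bool → Prop
  | base (ε : Bool) (p : Γ) (hp : p ∈ P) : Red P s (sgn s ε * p) ε
  | step (ε δ : Bool) (p w : Γ) (hp : p ∈ P) (hw : Red P s w δ)
      (h : ε = !δ → sgn s ε * p * sgn s δ ∉ P) : Red P s (sgn s ε * p * w) ε

/-- Every element of `⟨P, s⟩` outside `P` becomes pinch-free after splitting off an element of `P`. -/
theorem exists_red (P : Subgroup Γ) (s : Γ) {g : Γ}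
    (hg : g ∈ Subgroup.closure ((P : Set Γ) ∪ {s})) :
    g ∈ P ∨ ∃ p ∈ P, ∃ w ε, Red P s w ε ∧ g = p * w := by
  have key : ∀ (ε : Bool) (g : Γ), (g ∈ P ∨ ∃ p ∈ P, ∃ w ε, Red P s w ε ∧ g = p * w) →
      (sgn s ε * g ∈ P ∨ ∃ p ∈ P, ∃ w δ, Red P s w δ ∧ sgn s ε * g = p * w) := by
    rintro ε g (hg | ⟨p, hp, w, δ, hw, rfl⟩)
    · exact Or.inr ⟨1, P.one_mem, _, ε, Red.base ε g hg, by simp⟩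
    · by_cases h : ε = !δ ∧ sgn s ε * p * sgn s δ ∈ P
      · obtain ⟨-, h⟩ := h
        cases hw with
        | base _ q hq =>
          left
          have := P.mul_mem h hq
          simpa [mul_assoc] using this
        | step _ δ' q w' hq hw' _ =>
          right
          exact ⟨sgn s ε * p * sgn s δ * q, P.mul_mem h hq, w', δ', hw', by simp [mul_assoc]⟩
      · right
        refine ⟨1, P.one_mem, _, ε, Red.step ε δ p w hp hw ?_, by simp [mul_assoc]⟩
        tauto
  have keyP : ∀ (q : Γ), q ∈ P → ∀ g, (g ∈ P ∨ ∃ p ∈ P, ∃ w ε, Red P s w ε ∧ g = p * w) →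
      (q * g ∈ P ∨ ∃ p ∈ P, ∃ w δ, Red P s w δ ∧ q * g = p * w) := by
    rintro q hq g (hg | ⟨p, hp, w, δ, hw, rfl⟩)
    · exact Or.inl (P.mul_mem hq hg)
    · exact Or.inr ⟨q * p, P.mul_mem hq hp, w, δ, hw, by rw [mul_assoc]⟩
  induction hg using Subgroup.closure_induction_left with
  | one => exact Or.inl P.one_mem
  | mul_left x hx y _ ih =>
    rcases hx with hx | hx
    · exact keyP x hx y ih
    · rw [Set.mem_singleton_iff] at hx
      subst hx
      exact key true y ih
  | inv_mul_cancel x hx y _ ih =>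
    rcases hx with hx | hx
    · exact keyP _ (P.inv_mem hx) y ih
    · rw [Set.mem_singleton_iff] at hx
      subst hx
      exact key false y ih

/-- If cancellation between `s^±1` and pinch-free continuations leaves a positive middle part of
each `s^±1`, then pinch-free words move the base vertex, so that `⟨P, s⟩` meets its stabiliser only in
`P`. -/
theorem hnn_base (P : Subgroup Γ) (hP : P ≤ T.base) (s : Γ) (a : Bool → ℕ)
    (ha : a true + a false < T.L s)
    (hK : ∀ ε δ, ∀ p ∈ P, (ε = !δ → sgn s ε * p * sgn s δ ∉ P) →
      T.K (sgn s (!ε)) (p * sgn s δ) ≤ a δ ∧ T.K (sgn s (!ε)) (p * sgn s δ) ≤ a (!ε))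
    {g : Γ} (hg : g ∈ Subgroup.closure ((P : Set Γ) ∪ {s})) (hg0 : T.L g = 0) : g ∈ P := by
  have ha' : ∀ ε, a ε + a (!ε) < T.L s := by
    intro ε; cases ε
    · simpa [add_comm] using ha
    · simpa using ha
  have inv : ∀ w ε, Red P s w ε → a ε < T.K w (sgn s ε) := by
    intro w ε hw
    induction hw with
    | base ε p hp =>
      rw [K_mul_right (hP hp), K_self, len_sgn]
      have := ha' ε
      omega
    | step ε δ p w hp hw h ih =>
      obtain ⟨h1, h2⟩ := hK ε δ p hp h
      rw [sgn_not] at h1 h2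
      rw [mul_assoc]
      have h3 := T.ultra (sgn s ε)⁻¹ (p * w) (p * sgn s δ)
      rw [K_mul_left (hP hp)] at h3
      have h4 := T.len_mul (sgn s ε) (p * w)
      have h5 := T.len_inv_mul (sgn s ε * (p * w)) (sgn s ε)
      rw [show (sgn s ε * (p * w))⁻¹ * sgn s ε = (p * w)⁻¹ by group, T.len_inv] at h5
      have h6 := ha' ε
      have h7 := T.len_sgn s ε
      omega
  rcases exists_red P s hg with h | ⟨p, hp, w, ε, hw, rfl⟩
  · exact h
  · exfalso
    rw [len_mul_left (hP hp)] at hg0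
    have h1 := inv w ε hw
    have h2 := T.K_le_left w (sgn s ε)
    omega

/-- If the geodesics to `g v` and to `g⁻¹ v` both start with the edge to the neighbour `y v`, then
conjugation by `y` shortens `g` by two. -/
theorem conj_len {y g : Γ} (hy : T.L y = 1) (h1 : 0 < T.K y g) (h2 : 0 < T.K y g⁻¹)
    (hg : 2 ≤ T.L g) :
    T.L (y⁻¹ * g * y) + 2 = T.L g ∧ 0 < T.K y (g * y) ∧ T.L (g * y) + 1 = T.L g ∧
      T.K g (g * y) + 1 = T.L g := by
  have e1 := T.K_le_left y g
  have e2 := T.K_le_left y g⁻¹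
  have e3 := T.len_mul g y
  have e4 := T.K_comm y g⁻¹
  have e5 := T.len_inv_mul g (g * y)
  rw [inv_mul_cancel_left] at e5
  have e6 := T.ultra y g (g * y)
  have e7 := T.len_inv_mul y (g * y)
  rw [← mul_assoc] at e7
  have e8 := T.K_le_left y (g * y)
  omega

theorem conj_len_le {y g : Γ} (hy : T.L y = 1) (h1 : 0 < T.K y g) :
    T.L (y⁻¹ * g * y) ≤ T.L g := by
  have e3 := T.len_mul (y⁻¹ * g) y
  have e7 := T.len_inv_mul y g
  omega

end TreeLength

/-! ### Trees with one orbit of edges and Nielsen reduction -/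

/-- An action on a tree that is transitive on vertices and has one orbit of edges. The involution
`σ` inverts an edge at the base vertex `v`, and `C` is the pointwise stabiliser of this edge. The field
`nbr` says that every geodesic leaving `v` starts with the edge to some `b σ v` with `b` fixing `v`, and
`edge` that an element `b` fixing `v` and `σ v` lies in `C`. -/
structure EdgeTree (Γ : Type*) [Group Γ] extends TreeLength Γ where
  σ : Γ
  C : Subgroup Γ
  σ_sq : σ * σ = 1
  len_σ : L σ = 1
  nbr : ∀ g, 0 < L g → ∃ b, L b = 0 ∧ 0 < K (b * σ) g
  edge : ∀ b, L b = 0 → 0 < K σ (b * σ) → b ∈ C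
  len_C : ∀ c ∈ C, L c = 0
  conj_C : ∀ c ∈ C, σ * c * σ ∈ C

/-- A relation, thought of as a set of pairs, that is closed under the elementary Nielsen
transformations and under simultaneous conjugation. -/
structure NielsenClosed {Γ : Type*} [Group Γ] (N : Γ → Γ → Prop) : Prop where
  swap : ∀ {g h}, N g h → N h g
  inv : ∀ {g h}, N g h → N g⁻¹ h
  mul : ∀ {g h}, N g h → N g (g * h)
  conj : ∀ {g h} (x), N g h → N (x⁻¹ * g * x) (x⁻¹ * h * x)

namespace NielsenClosed

variable {Γ : Type*} [Group Γ] {N : Γ → Γ → Prop} (hN : NielsenClosed N)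
include hN

theorem inv_right {g h : Γ} (h1 : N g h) : N g h⁻¹ := hN.swap (hN.inv (hN.swap h1))

theorem inv_mul {g h : Γ} (h1 : N g h) : N g (g⁻¹ * h) := by
  have := hN.inv (hN.mul (hN.inv h1))
  rwa [inv_inv] at this

theorem zpow_mul {g h p : Γ} (h1 : N g h) (hp : p ∈ Subgroup.zpowers g) : N g (p * h) := by
  obtain ⟨i, rfl⟩ := hp
  simp only
  induction i with
  | zero => simpa using h1
  | succ n ih =>
    have := hN.mul ih
    rwa [← mul_assoc, ← zpow_one_add, add_comm] at this
  | pred n ih =>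
    have := hN.inv_mul ih
    rwa [← mul_assoc, ← zpow_neg_one, ← zpow_add, add_comm, ← sub_eq_add_neg] at this

end NielsenClosed

namespace EdgeTree

open TreeLength

variable {Γ : Type*} [Group Γ] (E : EdgeTree Γ)

theorem σ_inv : E.σ⁻¹ = E.σ := inv_eq_of_mul_eq_one_left E.σ_sq

variable {E} in
theorem len_mul_σ {b : Γ} (hb : E.L b = 0) : E.L (b * E.σ) = 1 := by
  rw [len_mul_left hb, E.len_σ]

/-- An element which is not hyperbolic is conjugate into the stabiliser of the base vertex, or
to an element inverting the edge of `σ`. The proof conjugates along the common initial segment of the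
geodesics to `g v` and `g⁻¹ v`. -/
theorem elliptic (n : ℕ) : ∀ g, E.L g = n → E.L g ≤ 2 * E.K g g⁻¹ →
    (∃ x, E.L (x⁻¹ * g * x) = 0) ∨ ∃ x, ∃ c ∈ E.C, x⁻¹ * g * x = E.σ * c := by
  induction n using Nat.strong_induction_on with
  | _ n ih =>
  intro g hg h
  rcases Nat.eq_zero_or_pos n with rfl | hn
  · exact Or.inl ⟨1, by simpa using hg⟩
  obtain ⟨b, hb, hbg⟩ := E.nbr g (by omega)
  have hy := len_mul_σ hb
  set y := b * E.σ with hydef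
  have hbg' : 0 < E.K y g⁻¹ := by
    have := E.ultra y g g⁻¹
    omega
  by_cases h2 : 2 ≤ n
  · obtain ⟨e1, e2, e3, e4⟩ := E.conj_len hy hbg hbg' (by omega)
    obtain ⟨f1, f2, f3, f4⟩ := E.conj_len (g := g⁻¹) hy hbg' (by simpa using hbg)
      (by rw [E.len_inv]; omega)
    rw [E.len_inv] at f1 f3 f4
    have k1 := E.ultra (g * y) g g⁻¹
    have k2 := E.ultra (g * y) g⁻¹ (g⁻¹ * y)
    have k3 := E.K_comm g (g * y)
    -- translating by the inverse of an edge at the base vertex shortens the overlap by one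
    have k4 := E.len_inv_mul (y⁻¹ * g * y) (y⁻¹ * g * y)⁻¹
    have k5 := E.len_inv_mul (g * y) (g⁻¹ * y)
    rw [show (y⁻¹ * g * y)⁻¹ * (y⁻¹ * g * y)⁻¹ = (g * y)⁻¹ * (g⁻¹ * y) by group] at k4
    rw [E.len_inv] at k4
    rcases ih (n - 2) (by omega) (y⁻¹ * g * y) (by omega) (by omega) with ⟨x, hx⟩ | ⟨x, c, hc, hx⟩
    · exact Or.inl ⟨y * x, by rw [← hx]; congr 1; group⟩
    · exact Or.inr ⟨y * x, c, hc, by rw [← hx]; group⟩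
  · right
    have e1 := E.K_le_left y g
    have e2 := E.len_inv_mul y g
    have e3 := E.K_le_left y g⁻¹
    have hd : E.L (y⁻¹ * g) = 0 := by omega
    -- `g = y d` with `d` in the base group, and `d b` stabilises the edge
    set d := y⁻¹ * g with hddef
    have hgd : g = y * d := by rw [hddef]; group
    have hdb : E.L (d * b) = 0 := by rw [len_mul_right hb, hd]
    refine ⟨b, d * b, E.edge _ hdb ?_, ?_⟩
    · rw [hgd, mul_inv_rev] at hbg'
      have k := E.len_inv_mul y (d⁻¹ * y⁻¹)
      have k' := E.len_inv_mul E.σ (d * b * E.σ)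
      have e4 := E.len_inv (y⁻¹ * (d⁻¹ * y⁻¹))
      rw [show (y⁻¹ * (d⁻¹ * y⁻¹))⁻¹ = b * (E.σ * (d * b * E.σ)) by rw [hydef]; group,
        len_mul_left hb] at e4
      rw [σ_inv, len_mul_left hdb] at k'
      rw [len_mul_left (p := d⁻¹) (by rw [E.len_inv, hd]), E.len_inv] at k
      have := E.len_σ
      omega
    · rw [hgd, hydef]; group

section stepOne

variable {N : Γ → Γ → Prop} (hN : NielsenClosed N)

/-- A pair of minimal total length in the class `N`. -/
def Minimal (N : Γ → Γ → Prop) (g h : Γ) : Prop :=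
  N g h ∧ ∀ g' h', N g' h' → E.L g + E.L h ≤ E.L g' + E.L h'

include hN

variable {E} in
theorem Minimal.swap {g h : Γ} (hm : E.Minimal N g h) : E.Minimal N h g :=
  ⟨hN.swap hm.1, fun g' h' h1 => by have := hm.2 g' h' h1; omega⟩

variable {E} in
theorem Minimal.inv {g h : Γ} (hm : E.Minimal N g h) : E.Minimal N g⁻¹ h :=
  ⟨hN.inv hm.1, fun g' h' h1 => by rw [E.len_inv]; exact hm.2 g' h' h1⟩

variable {E} in
theorem Minimal.inv_right {g h : Γ} (hm : E.Minimal N g h) : E.Minimal N g h⁻¹ :=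
  ((hm.swap hN).inv hN).swap hN

variable {E} in
theorem Minimal.K_le {g h : Γ} (hm : E.Minimal N g h) : 2 * E.K g h ≤ E.L g := by
  have h1 := hm.2 _ _ (hN.inv_mul hm.1)
  have h2 := E.len_inv_mul g h
  omega

variable {E} in
/-- If both ends of `g` cancelled half of `g` in products with `h`, the pair `(g, g⁻¹h)` would
have the same total length and could be shortened by a conjugation. -/
theorem Minimal.not_both {g h : Γ} (hm : E.Minimal N g h) (hg : 0 < E.L g)
    (h1 : 2 * E.K g h = E.L g) (h2 : 2 * E.K g⁻¹ h⁻¹ = E.L g) : False := by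
  have h3 := (hm.swap hN).K_le hN
  rw [E.K_comm] at h3
  -- `k = g⁻¹ h` has the length of `h`, and both `k` and `k⁻¹` start along `g⁻¹`
  have hk := E.len_inv_mul g h
  set k := g⁻¹ * h with hkdef
  have e1 := E.len_inv_mul g⁻¹ k
  rw [inv_inv, show g * k = h by rw [hkdef]; group, E.len_inv] at e1
  have e2 := E.len_inv_mul h⁻¹ k⁻¹
  rw [show (h⁻¹)⁻¹ * k⁻¹ = g by rw [hkdef]; group, E.len_inv, E.len_inv] at e2
  have e3 := E.ultra g⁻¹ h⁻¹ k⁻¹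
  obtain ⟨b, hb, hbg⟩ := E.nbr g⁻¹ (by rw [E.len_inv]; exact hg)
  have hy := len_mul_σ hb
  set y := b * E.σ
  have e4 := E.ultra y g⁻¹ k
  have e5 := E.ultra y g⁻¹ k⁻¹
  have e6 := (E.conj_len (g := k) hy (by omega) (by omega) (by omega)).1
  have e7 := E.conj_len_le hy hbg
  rw [show y⁻¹ * g⁻¹ * y = (y⁻¹ * g * y)⁻¹ by group, E.len_inv, E.len_inv] at e7
  have e8 := hm.2 _ _ (hN.conj y (hN.inv_mul hm.1))
  rw [← hkdef] at e8
  omega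

variable {E} in
/-- The cancellation at the two ends of `g` in a minimal pair does not exhaust `g`, provided that
`g` is hyperbolic. -/
theorem Minimal.max_lt {g h : Γ} (hm : E.Minimal N g h) (hg : 2 * E.K g g⁻¹ < E.L g) :
    max (E.K g g⁻¹) (max (E.K g h) (E.K g h⁻¹)) +
      max (E.K g⁻¹ g) (max (E.K g⁻¹ h) (E.K g⁻¹ h⁻¹)) < E.L g := by
  have a1 := hm.K_le hN
  have a2 := (hm.inv hN).K_le hN
  have a3 := (hm.inv_right hN).K_le hN
  have a4 := ((hm.inv hN).inv_right hN).K_le hN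
  rw [E.len_inv] at a2 a4
  have c := E.K_comm g g⁻¹
  have b1 : ¬(2 * E.K g h = E.L g ∧ 2 * E.K g⁻¹ h⁻¹ = E.L g) :=
    fun h => hm.not_both hN (by omega) h.1 h.2
  have b2 : ¬(2 * E.K g h⁻¹ = E.L g ∧ 2 * E.K g⁻¹ h = E.L g) :=
    fun h => (hm.inv_right hN).not_both hN (by omega) h.1 (by rw [inv_inv]; exact h.2)
  have u1 := E.ultra g h g⁻¹
  have u2 := E.ultra g h⁻¹ g⁻¹
  rw [E.K_comm h g⁻¹] at u1
  rw [E.K_comm h⁻¹ g⁻¹] at u2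
  omega

/-- A Nielsen class all of whose entries are hyperbolic contains a free basis of a group acting
freely on the vertices, namely any pair of minimal total length. -/
theorem exists_free (hne : ∃ g h, N g h) (hyp : ∀ g h, N g h → 2 * E.K g g⁻¹ < E.L g) :
    ∃ g h, N g h ∧ ∀ w : FreeGroup (Fin 2), w ≠ 1 → 0 < E.L (FreeGroup.lift ![g, h] w) := by
  classical
  have hex : ∃ n g h, N g h ∧ E.L g + E.L h = n := by
    obtain ⟨g, h, hgh⟩ := hne
    exact ⟨_, g, h, hgh, rfl⟩
  obtain ⟨g, h, hgh, hl⟩ := Nat.find_spec hex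
  have hm : E.Minimal N g h :=
    ⟨hgh, fun g' h' h1 => by rw [hl]; exact Nat.find_min' hex ⟨g', h', h1, rfl⟩⟩
  refine ⟨g, h, hgh, ?_⟩
  have m1 := hm.max_lt hN (hyp _ _ hgh)
  have m2 := (hm.swap hN).max_lt hN (hyp _ _ (hN.swap hgh))
  let v : Fin 2 × Bool → Γ := letter ![g, h]
  let u : Fin 2 → Γ := ![h, g]
  apply E.free_pos ![g, h]
    (fun p => max (E.K (v p) (v p)⁻¹) (max (E.K (v p) (u p.1)) (E.K (v p) (u p.1)⁻¹)))
  · rintro ⟨i, a⟩ ⟨j, b⟩ hne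
    fin_cases i <;> fin_cases j <;> cases a <;> cases b <;> simp [v, u, letter] at hne ⊢
  · rintro ⟨i, a⟩
    fin_cases i <;> cases a <;> simp [v, u, letter, E.len_inv]
    all_goals omega

end stepOne

section stepTwo

variable (hmal : ∀ b c, E.L b = 0 → c ∈ E.C → c ≠ 1 → b⁻¹ * c * b ∈ E.C → b ∈ E.C)

variable {E} in
/-- If `p` fixes the base vertex and the first edge of the geodesic to `s v`, and `b σ v` is the
neighbour on that geodesic, then `b⁻¹ p b` stabilises the edge of `σ`. -/
theorem conj_mem_C {b p s : Γ} (hb : E.L b = 0) (hp : E.L p = 0) (h1 : 0 < E.K (b * E.σ) s)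
    (h2 : 0 < E.K s (p * s)) : b⁻¹ * p * b ∈ E.C := by
  have hb' : E.L b⁻¹ = 0 := by rw [E.len_inv, hb]
  have e1 := E.ultra (b * E.σ) s (p * s)
  have e2 := E.ultra (b * E.σ) (p * s) (p * (b * E.σ))
  rw [K_mul_left hp, E.K_comm s] at e2
  apply E.edge
  · rw [len_mul_right hb, len_mul_left hb', hp]
  · rw [← K_mul_left hb, show b * (b⁻¹ * p * b * E.σ) = p * (b * E.σ) by group]
    omega

include hmal

/-- If a nontrivial power of `f` stabilises an edge at the base vertex, then by malnormality so
does `f`. -/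
theorem root_mem_C {f p b : Γ} (hf : E.L f = 0) (hb : E.L b = 0) (hp : p ∈ Subgroup.zpowers f)
    (hp1 : p ≠ 1) (h : b⁻¹ * p * b ∈ E.C) : b⁻¹ * f * b ∈ E.C := by
  have hb' : E.L b⁻¹ = 0 := by rw [E.len_inv, hb]
  refine hmal _ _ ?_ h ?_ ?_
  · rw [len_mul_right hb, len_mul_left hb', hf]
  · intro h1
    apply hp1
    have : p = b * (b⁻¹ * p * b) * b⁻¹ := by group
    rw [this, h1]; simp
  · obtain ⟨i, rfl⟩ := hp
    convert h using 1
    simp only [mul_inv_rev, inv_inv]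
    group

/-- A nontrivial element of the base group fixes at most the first edge of any geodesic starting
at the base vertex. -/
theorem acylindrical {b g : Γ} (hb : E.L b = 0) (hb1 : b ≠ 1) : E.K g (b * g) ≤ 1 := by
  by_contra hcon
  have h0 := E.K_le_left g (b * g)
  obtain ⟨b₀, hb₀, h1⟩ := E.nbr g (by omega)
  have hb₀' : E.L b₀⁻¹ = 0 := by rw [E.len_inv, hb₀]
  have hc := conj_mem_C hb₀ hb h1 (by omega)
  set c := b₀⁻¹ * b * b₀ with hcdef
  have hc' := E.conj_C c hc
  -- `g = b₀ σ k`, and `σ c σ` fixes the first edge towards `k`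
  set k := (b₀ * E.σ)⁻¹ * g with hkdef
  have hy := len_mul_σ hb₀
  have hK := E.K_le_left (b₀ * E.σ) g
  have hk : E.L k + 1 = E.L g := by
    have := E.len_inv_mul (b₀ * E.σ) g
    rw [← hkdef] at this
    omega
  have hgk : g = b₀ * (E.σ * k) := by rw [hkdef]; group
  have e1 := E.len_inv_mul g (b * g)
  have e2 := E.len_inv_mul k ((E.σ * c * E.σ) * k)
  rw [len_mul_left hb] at e1
  rw [len_mul_left (E.len_C _ hc')] at e2
  rw [show k⁻¹ * ((E.σ * c * E.σ) * k) = g⁻¹ * (b * g) by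
    rw [hkdef, hcdef]
    have hs : E.σ * E.σ = 1 := E.σ_sq
    have hs' := E.σ_inv
    simp only [mul_inv_rev, inv_inv, hs', mul_assoc]
    rw [← mul_assoc E.σ E.σ, hs, ← mul_assoc E.σ E.σ, hs]
    group] at e2
  obtain ⟨b₁, hb₁, h2⟩ := E.nbr k (by omega)
  have hd := conj_mem_C hb₁ (E.len_C _ hc') h2 (by omega)
  have hb₁C : b₁ ∈ E.C := by
    refine hmal _ _ hb₁ hc' ?_ hd
    intro h
    apply hb1
    have : b = b₀ * (E.σ * (E.σ * c * E.σ) * E.σ) * b₀⁻¹ := by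
      rw [hcdef, show E.σ * (E.σ * (b₀⁻¹ * b * b₀) * E.σ) * E.σ =
        (E.σ * E.σ) * (b₀⁻¹ * b * b₀) * (E.σ * E.σ) by simp only [mul_assoc], E.σ_sq]
      group
    rw [this, h, mul_one, E.σ_sq]; group
  -- so the geodesic to `k v` starts with the edge to `σ v`, and `g` is shorter than assumed
  have e3 := E.len_inv_mul (E.σ) (b₁ * E.σ)
  rw [E.σ_inv, ← mul_assoc, E.len_C _ (E.conj_C _ hb₁C), len_mul_σ hb₁, E.len_σ] at e3
  have e4 := E.ultra E.σ (b₁ * E.σ) k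
  have e5 := E.len_mul E.σ k
  rw [E.σ_inv, E.len_σ, ← len_mul_left hb₀, ← hgk] at e5
  omega

variable {N : Γ → Γ → Prop} (hN : NielsenClosed N)
  (hgen : ∀ f s, N f s → Subgroup.closure {f, s} = ⊤)
  (hyp : ∀ f s, N f s → E.L f = 0 → 2 * E.K s s⁻¹ < E.L s)
  (hcyc : ∀ f, ∃ b, E.L b = 0 ∧ b ∉ Subgroup.zpowers f)

omit hmal in
include hgen hcyc in
/-- A generating pair `(f, s)` with `f` in the noncyclic base group admits no cancellation bounds
exhibiting the group as the free product of `⟨f⟩` and `⟨s⟩`. -/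
theorem not_hnn {f s : Γ} (h : N f s) (hf : E.L f = 0) (a : Bool → ℕ)
    (ha : a true + a false < E.L s)
    (hK : ∀ ε δ, ∀ p ∈ Subgroup.zpowers f, (ε = !δ → p ≠ 1) →
      E.K (sgn s (!ε)) (p * sgn s δ) ≤ a δ ∧ E.K (sgn s (!ε)) (p * sgn s δ) ≤ a (!ε)) :
    False := by
  obtain ⟨b, hb, hb'⟩ := hcyc f
  apply hb'
  refine E.hnn_base (Subgroup.zpowers f) ?_ s a ha ?_ (g := b) ?_ hb
  · rw [Subgroup.zpowers_le]; exact hf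
  · intro ε δ p hp h1
    refine hK ε δ p hp ?_
    rintro rfl rfl
    apply h1 rfl
    rw [sgn_not]; simp
  · have : b ∈ Subgroup.closure {f, s} := by rw [hgen f s h]; trivial
    refine Subgroup.closure_mono ?_ this
    rintro x (rfl | rfl)
    · exact Or.inl (Subgroup.mem_zpowers x)
    · exact Or.inr rfl

include hN hgen hyp hcyc

/-- In a pair `(f, s)` with `f` in the base group and `s` of minimal length, the geodesics to
`s v` and `s⁻¹ v` share no edge: otherwise either `f` fixes their first edge, and conjugation along it
shortens `s`, or `(f, s)` is excluded by `not_hnn`. -/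
theorem K_inv_eq_zero {f s : Γ} (h : N f s) (hf : E.L f = 0)
    (hmin : ∀ f' s', N f' s' → E.L f' = 0 → E.L s ≤ E.L s') : E.K s s⁻¹ = 0 := by
  by_contra hm
  have hz : ∀ p ∈ Subgroup.zpowers f, E.L p = 0 := by
    intro p hp
    exact (Subgroup.zpowers_le (H := E.base)).2 hf hp
  have h0 := hyp f s h hf
  have key : ∀ p ∈ Subgroup.zpowers f, p ≠ 1 → E.K s (p * s) = 0 := by
    intro p hp hp1
    by_contra hK
    obtain ⟨b, hb, hbs⟩ := E.nbr s (by omega)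
    have h1 := E.root_mem_C hmal hf hb hp hp1
      (conj_mem_C hb (hz p hp) hbs (by omega))
    have h2 := E.conj_C _ h1
    have e1 := E.ultra (b * E.σ) s s⁻¹
    have e2 := (E.conj_len (len_mul_σ hb) hbs (by omega) (by omega)).1
    have e3 := hmin _ _ (hN.conj (b * E.σ) h) (by
      rw [show (b * E.σ)⁻¹ * f * (b * E.σ) = E.σ * (b⁻¹ * f * b) * E.σ by
        rw [mul_inv_rev, E.σ_inv]; group]
      exact E.len_C _ h2)
    omega
  refine E.not_hnn hgen hcyc h hf (fun _ => E.K s s⁻¹) (by omega) ?_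
  intro ε δ p hp hne
  have hsg : ∀ ε, 0 < E.K s (sgn s ε) := by
    intro ε; cases ε
    · simp only [sgn, cond]; omega
    · simp only [sgn, cond, K_self]; omega
  suffices h : E.K (sgn s (!ε)) (p * sgn s δ) ≤ E.K s s⁻¹ from ⟨h, h⟩
  by_cases hp1 : p = 1
  · subst hp1
    have := E.K_comm s s⁻¹
    cases ε <;> cases δ <;> simp [sgn] at hne ⊢ <;> omega
  · have e1 := E.ultra s (sgn s (!ε)) (p * sgn s δ)
    have e2 := E.ultra s (p * sgn s δ) (p * s)
    rw [K_mul_left (hz p hp), E.K_comm _ s] at e2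
    have e3 := hsg (!ε)
    have e4 := hsg δ
    have e5 := key p hp hp1
    omega

/-- If the base group is noncyclic and `C` is malnormal in it, a Nielsen class of generating
pairs with an entry `f` in the base group, such that the partners of such entries are hyperbolic,
contains a pair `(f, σ b)` with `1 ≠ f ∈ C` and `b` in the base group outside `C`. -/
theorem exists_edge_pair (hne : ∃ f s, N f s ∧ E.L f = 0) :
    ∃ f b, f ∈ E.C ∧ f ≠ 1 ∧ E.L b = 0 ∧ b ∉ E.C ∧ N f (E.σ * b) := by
  classical
  have hex : ∃ n f s, N f s ∧ E.L f = 0 ∧ E.L s = n := by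
    obtain ⟨f, s, h, hf⟩ := hne
    exact ⟨_, f, s, h, hf, rfl⟩
  obtain ⟨f, s, hfs, hf, hs⟩ := Nat.find_spec hex
  have hmin : ∀ f' s', N f' s' → E.L f' = 0 → Nat.find hex ≤ E.L s' :=
    fun f' s' h h' => Nat.find_min' hex ⟨f', s', h, h', rfl⟩
  generalize Nat.find hex = n at hs hmin
  have hz : ∀ p ∈ Subgroup.zpowers f, E.L p = 0 := by
    intro p hp
    exact (Subgroup.zpowers_le (H := E.base)).2 hf hp
  have hmix : ∀ p ∈ Subgroup.zpowers f, E.K s⁻¹ (p * s) = 0 := by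
    intro p hp
    have := E.K_inv_eq_zero hmal hN hgen hyp hcyc (hN.zpow_mul hfs hp) hf (by
      rw [len_mul_left (hz p hp), hs]; exact hmin)
    rwa [mul_inv_rev, K_mul_right' (by rw [E.len_inv, hz p hp]), E.K_comm] at this
  have hmix' : ∀ p ∈ Subgroup.zpowers f, E.K s (p * s⁻¹) = 0 := by
    intro p hp
    rw [← K_mul_left (p := p⁻¹) (by rw [E.len_inv, hz p hp]), inv_mul_cancel_left, E.K_comm]
    exact hmix _ (inv_mem hp)
  have hs0 := hyp f s hfs hf
  -- otherwise the pair would generate a free product meeting the base group in `⟨f⟩`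
  have hfix : ∃ t, (t = s ∨ t = s⁻¹) ∧ ∃ p ∈ Subgroup.zpowers f, p ≠ 1 ∧ 0 < E.K t (p * t) := by
    by_contra hcon
    push Not at hcon
    refine E.not_hnn hgen hcyc hfs hf (fun _ => 0) (by omega) ?_
    intro ε δ p hp hne
    suffices h : E.K (sgn s (!ε)) (p * sgn s δ) = 0 from ⟨h.le, h.le⟩
    have h1 := hmix p hp
    have h2 := hmix' p hp
    have h3 := hcon s (Or.inl rfl) p hp
    have h4 := hcon s⁻¹ (Or.inr rfl) p hp
    cases ε <;> cases δ <;> simp [sgn] at hne h3 h4 ⊢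
    · exact h2
    · exact h3 hne
    · exact h4 hne
    · exact h1
  obtain ⟨t, ht, p, hp, hp1, htp⟩ := hfix
  have hft : N f t := by
    rcases ht with rfl | rfl
    · exact hfs
    · exact hN.inv_right hfs
  have htl : E.L t = n := by
    rcases ht with rfl | rfl
    · exact hs
    · rw [E.len_inv, hs]
  clear hmix hmix' ht hfs hs hs0
  have ht0 := hyp f t hft hf
  obtain ⟨b, hb, hbt⟩ := E.nbr t (by omega)
  have hb' : E.L b⁻¹ = 0 := by rw [E.len_inv, hb]
  have hfC := E.root_mem_C hmal hf hb hp hp1 (conj_mem_C hb (hz p hp) hbt htp)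
  have hf1 : b⁻¹ * f * b ≠ 1 := by
    intro h
    apply hp1
    have : f = b * (b⁻¹ * f * b) * b⁻¹ := by group
    rw [h] at this
    have h' : f = 1 := by simpa using this
    subst h'
    simpa using hp
  have hNc := hN.conj b hft
  have hlc : E.L (b⁻¹ * t * b) = n := by rw [len_mul_right hb, len_mul_left hb', htl]
  have hσ : 0 < E.K E.σ (b⁻¹ * t * b) := by
    rw [K_mul_right' hb, ← K_mul_left hb]
    simpa using hbt
  generalize b⁻¹ * f * b = f' at hNc hfC hf1
  generalize b⁻¹ * t * b = s' at hNc hlc hσ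
  have hf0 := E.len_C _ hfC
  have hz' : ∀ p ∈ Subgroup.zpowers f', E.L p = 0 := by
    intro p hp
    exact (Subgroup.zpowers_le (H := E.base)).2 hf0 hp
  have hm0 := E.K_inv_eq_zero hmal hN hgen hyp hcyc hNc hf0 (by rw [hlc]; exact hmin)
  by_cases hn : 2 ≤ n
  · exfalso
    have hmix : ∀ p ∈ Subgroup.zpowers f', E.K s'⁻¹ (p * s') = 0 := by
      intro p hp
      have := E.K_inv_eq_zero hmal hN hgen hyp hcyc (hN.zpow_mul hNc hp) hf0 (by
        rw [len_mul_left (hz' p hp), hlc]; exact hmin)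
      rwa [mul_inv_rev, K_mul_right' (by rw [E.len_inv, hz' p hp]), E.K_comm] at this
    have hmix' : ∀ p ∈ Subgroup.zpowers f', E.K s' (p * s'⁻¹) = 0 := by
      intro p hp
      rw [← K_mul_left (p := p⁻¹) (by rw [E.len_inv, hz' p hp]), inv_mul_cancel_left, E.K_comm]
      exact hmix _ (inv_mem hp)
    have hend : ∀ p ∈ Subgroup.zpowers f', p ≠ 1 → E.K s'⁻¹ (p * s'⁻¹) = 0 := by
      intro p hp hp1
      by_contra hK
      obtain ⟨d, hd, hds⟩ := E.nbr s'⁻¹ (by rw [E.len_inv]; omega)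
      have h1 := conj_mem_C hd (hz' p hp) hds (by omega)
      have h2 := hmal d p hd ((Subgroup.zpowers_le (H := E.C)).2 hfC hp) hp1 h1
      have e3 := E.len_inv_mul (E.σ) (d * E.σ)
      rw [E.σ_inv, ← mul_assoc, E.len_C _ (E.conj_C _ h2), len_mul_σ hd, E.len_σ] at e3
      have e4 := E.ultra E.σ (d * E.σ) s'⁻¹
      have e5 := E.ultra s' E.σ s'⁻¹
      rw [E.K_comm s'] at e5
      omega
    refine E.not_hnn hgen hcyc hNc hf0 (fun ε => cond ε 1 0) (by simp; omega) ?_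
    intro ε δ p hp hne
    have h1 := hmix p hp
    have h2 := hmix' p hp
    have h3 := hend p hp
    have h4 := fun h : p ≠ 1 => E.acylindrical hmal (g := s') (hz' p hp) h
    cases ε <;> cases δ <;> simp [sgn] at hne ⊢
    · omega
    · exact h4 hne
    · exact h3 hne
    · omega
  · have e1 := E.K_le_left E.σ s'
    have e2 := E.len_inv_mul E.σ s'
    rw [E.len_σ] at e1 e2
    rw [E.σ_inv] at e2
    have hss : s' = E.σ * (E.σ * s') := by rw [← mul_assoc, E.σ_sq, one_mul]
    refine ⟨f', E.σ * s', hfC, hf1, by omega, ?_, by rw [← hss]; exact hNc⟩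
    intro hC
    have h1 := E.conj_C _ (inv_mem hC)
    have h2 := E.len_inv_mul s' s'⁻¹
    have h3 := E.len_C _ h1
    rw [show E.σ * (E.σ * s')⁻¹ * E.σ = (E.σ * s'⁻¹ * (E.σ * E.σ)) by
      rw [mul_inv_rev, E.σ_inv]; simp only [mul_assoc], E.σ_sq, mul_one] at h3
    have h4 := E.len_mul E.σ s'⁻¹
    have h5 := E.ultra s' E.σ s'⁻¹
    rw [E.K_comm s'] at h5
    have h6 := E.len_inv s'
    rw [E.σ_inv, E.len_σ] at h4
    omega

end stepTwo

end EdgeTree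

/-! ### The tree of sequences of cosets -/

namespace BassSerre

section vertices

variable {B : Type*} [Group B] (C : Subgroup B)

open Classical in
/-- A choice of coset representatives with `1` representing the trivial coset. -/
noncomputable def rep (q : B ⧸ C) : B := if q = ((1 : B) : B ⧸ C) then 1 else q.out

theorem mk_rep (q : B ⧸ C) : ((rep C q : B) : B ⧸ C) = q := by
  unfold rep
  split_ifs with h
  · exact h.symm
  · exact Quotient.out_eq' q

theorem rep_one : rep C ((1 : B) : B ⧸ C) = 1 := by simp [rep]

theorem mk_eq_one {b : B} : ((b : B) : B ⧸ C) = ((1 : B) : B ⧸ C) ↔ b ∈ C := by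
  rw [QuotientGroup.eq]; simp

theorem smul_mk (b q : B) : b • ((q : B) : B ⧸ C) = ((b * q : B) : B ⧸ C) := rfl

/-- The cocycle comparing the chosen representatives of `q` and `b • q`. -/
noncomputable def cocyc (b : B) (q : B ⧸ C) : C :=
  ⟨(rep C (b • q))⁻¹ * (b * rep C q), by
    rw [← QuotientGroup.eq, mk_rep, ← smul_mk, mk_rep]⟩

theorem cocyc_spec (b : B) (q : B ⧸ C) :
    b * rep C q = rep C (b • q) * (cocyc C b q : B) := by
  simp [cocyc]

theorem cocyc_mul (b b' : B) (q : B ⧸ C) :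
    cocyc C (b * b') q = cocyc C b (b' • q) * cocyc C b' q := by
  ext
  simp [cocyc, mul_smul, mul_assoc]

theorem cocyc_one (q : B ⧸ C) : cocyc C 1 q = 1 := by
  ext; simp [cocyc]

theorem mem_smul_one (c : C) : (c : B) • ((1 : B) : B ⧸ C) = ((1 : B) : B ⧸ C) := by
  rw [smul_mk, mul_one]; exact (mk_eq_one C).2 c.2

theorem cocyc_mem (c : C) : cocyc C (c : B) ((1 : B) : B ⧸ C) = c := by
  ext
  simp only [cocyc, mem_smul_one, rep_one]
  simp

variable (θ : C →* C)

/-- The action of `B` on sequences of cosets: it moves the first coset, and its error term,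
twisted by `θ`, acts on the rest. -/
noncomputable def act : List (B ⧸ C) → B → List (B ⧸ C)
  | [], _ => []
  | q :: l, b => (b • q) :: act l (θ (cocyc C b q) : C)

theorem act_one (l : List (B ⧸ C)) : act C θ l 1 = l := by
  induction l with
  | nil => rfl
  | cons q l ih => simp [act, cocyc_one, ih]

theorem act_mul (l : List (B ⧸ C)) (b b' : B) :
    act C θ l (b * b') = act C θ (act C θ l b') b := by
  induction l generalizing b b' with
  | nil => rfl
  | cons q l ih => simp [act, cocyc_mul, mul_smul, ih]

theorem length_act (l : List (B ⧸ C)) (b : B) : (act C θ l b).length = l.length := by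
  induction l generalizing b with
  | nil => rfl
  | cons q l ih => simp [act, ih]

theorem act_ne (l : List (B ⧸ C)) (hl : ∀ q ∈ l, q ≠ ((1 : B) : B ⧸ C)) (c : C) :
    ∀ q ∈ act C θ l c, q ≠ ((1 : B) : B ⧸ C) := by
  induction l generalizing c with
  | nil => simp [act]
  | cons q l ih =>
    intro p hp
    simp only [act, List.mem_cons] at hp
    rcases hp with rfl | hp
    · intro h
      apply hl q (by simp)
      rw [← mem_smul_one C c] at h
      exact MulAction.injective _ h
    · exact ih (fun q hq => hl q (by simp [hq])) _ _ hp

/-- The vertices of the tree: sequences of cosets of `C` in `B` which are nontrivial from the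
second one on, recording the turns of the geodesic starting at the base vertex. -/
def Vert : Type _ := {l : List (B ⧸ C) // ∀ q ∈ l.tail, q ≠ ((1 : B) : B ⧸ C)}

/-- `B` acts on the vertices, fixing the base vertex. -/
noncomputable def actV (b : B) (v : Vert C) : Vert C :=
  ⟨act C θ v.1 b, by
    obtain ⟨_ | ⟨q, l⟩, hl⟩ := v
    · simp [act]
    · exact act_ne C θ l hl _⟩

/-- The action of `B` on the vertices as a homomorphism. -/
noncomputable def permB : B →* Equiv.Perm (Vert C) where
  toFun b :=
    { toFun := actV C θ b
      invFun := actV C θ b⁻¹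
      left_inv := fun v => Subtype.ext (by simp [actV, ← act_mul, act_one])
      right_inv := fun v => Subtype.ext (by simp [actV, ← act_mul, act_one]) }
  map_one' := by ext v; exact Subtype.ext (act_one C θ _)
  map_mul' b b' := by ext v; exact Subtype.ext (act_mul C θ _ b b')

open Classical in
/-- The flip on sequences: delete a leading trivial coset, or insert one. -/
noncomputable def flip : List (B ⧸ C) → List (B ⧸ C)
  | [] => [((1 : B) : B ⧸ C)]
  | q :: l => if q = ((1 : B) : B ⧸ C) then l else ((1 : B) : B ⧸ C) :: q :: l

theorem flip_one_cons (l : List (B ⧸ C)) : flip C (((1 : B) : B ⧸ C) :: l) = l := by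
  simp [flip]

theorem flip_of_ne (l : List (B ⧸ C)) (h : ∀ q ∈ l, q ≠ ((1 : B) : B ⧸ C)) :
    flip C l = ((1 : B) : B ⧸ C) :: l := by
  cases l with
  | nil => rfl
  | cons q l => simp [flip, h q (by simp)]

theorem vert_cases (v : Vert C) :
    (∃ l, v.1 = ((1 : B) : B ⧸ C) :: l ∧ ∀ q ∈ l, q ≠ ((1 : B) : B ⧸ C)) ∨
      ∀ q ∈ v.1, q ≠ ((1 : B) : B ⧸ C) := by
  obtain ⟨_ | ⟨q, l⟩, hl⟩ := v
  · simp
  · by_cases h : q = ((1 : B) : B ⧸ C)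
    · left; exact ⟨l, by rw [h], hl⟩
    · right
      intro p hp
      rcases List.mem_cons.1 hp with rfl | hp
      · exact h
      · exact hl p hp

/-- The flip on vertices. -/
noncomputable def flipV (v : Vert C) : Vert C :=
  ⟨flip C v.1, by
    rcases vert_cases C v with ⟨l, hv, hl⟩ | h
    · rw [hv, flip_one_cons]
      intro q hq
      exact hl q (List.mem_of_mem_tail hq)
    · rw [flip_of_ne C _ h]
      exact h⟩

theorem flip_flip (v : Vert C) : flip C (flip C v.1) = v.1 := by
  rcases vert_cases C v with ⟨l, hv, hl⟩ | h
  · rw [hv, flip_one_cons, flip_of_ne C _ hl]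
  · rw [flip_of_ne C _ h, flip_one_cons]

/-- The flip of the edge from the base vertex to the vertex `[1]`. -/
noncomputable def permS : Equiv.Perm (Vert C) where
  toFun := flipV C
  invFun := flipV C
  left_inv v := Subtype.ext (flip_flip C v)
  right_inv v := Subtype.ext (flip_flip C v)

theorem permS_mul_self : permS C * permS C = 1 := by
  ext v; exact Subtype.ext (flip_flip C v)

variable (hθ : ∀ c, θ (θ c) = c)

include hθ in
theorem permS_conj (c : C) : permS C * permB C θ c * permS C = permB C θ (θ c) := by
  ext v
  apply Subtype.ext
  change flip C (act C θ (flip C v.1) c) = act C θ v.1 (θ c)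
  rcases vert_cases C v with ⟨l, hv, hl⟩ | h
  · rw [hv, flip_one_cons, flip_of_ne C _ (act_ne C θ l hl c)]
    simp only [act, mem_smul_one, cocyc_mem, hθ]
  · rw [flip_of_ne C _ h]
    simp only [act, mem_smul_one, cocyc_mem, flip_one_cons]

end vertices

section lcp

open Classical in
/-- Length of the longest common prefix. -/
noncomputable def lcp {α : Type*} : List α → List α → ℕ
  | a :: l, b :: m => if a = b then lcp l m + 1 else 0
  | _, _ => 0

variable {α : Type*}

@[simp] theorem lcp_nil_left (m : List α) : lcp [] m = 0 := by simp [lcp]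

@[simp] theorem lcp_nil_right (m : List α) : lcp m [] = 0 := by cases m <;> simp [lcp]

theorem lcp_cons_self (a : α) (l m : List α) : lcp (a :: l) (a :: m) = lcp l m + 1 := by simp [lcp]

theorem lcp_cons_ne {a b : α} (h : a ≠ b) (l m : List α) : lcp (a :: l) (b :: m) = 0 := by
  simp [lcp, h]

theorem lcp_comm (l m : List α) : lcp l m = lcp m l := by
  induction l generalizing m with
  | nil => simp
  | cons a l ih =>
    cases m with
    | nil => simp
    | cons b m => by_cases h : a = b <;> simp [lcp, h, ih, Ne.symm]

theorem lcp_le (l m : List α) : lcp l m ≤ l.length := by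
  induction l generalizing m with
  | nil => simp
  | cons a l ih =>
    cases m with
    | nil => simp
    | cons b m => by_cases h : a = b <;> simp [lcp, h, ih]

theorem lcp_ultra (l m n : List α) : min (lcp l m) (lcp m n) ≤ lcp l n := by
  induction l generalizing m n with
  | nil => simp
  | cons a l ih =>
    cases m with
    | nil => simp
    | cons b m =>
      cases n with
      | nil => simp
      | cons c n =>
        have := ih m n
        by_cases h : a = b
        · by_cases h' : b = c
          · subst h h'
            simp only [lcp_cons_self]; omega
          · simp [lcp_cons_ne h']
        · simp [lcp_cons_ne h]

end lcp

section dist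

variable {B : Type*} [Group B] (C : Subgroup B) (θ : C →* C)

theorem lcp_act (l m : List (B ⧸ C)) (b : B) : lcp (act C θ l b) (act C θ m b) = lcp l m := by
  induction l generalizing m b with
  | nil => simp [act]
  | cons p l ih =>
    cases m with
    | nil => simp [act]
    | cons q m =>
      by_cases h : p = q
      · subst h
        simp [act, lcp_cons_self, ih]
      · rw [lcp_cons_ne h, act, act, lcp_cons_ne]
        intro h'
        exact h (MulAction.injective _ h')

/-- The combinatorial distance of two vertices. -/
noncomputable def vdist (v w : Vert C) : ℤ := v.1.length + w.1.length - 2 * lcp v.1 w.1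

theorem vdist_actV (b : B) (v w : Vert C) :
    vdist C (permB C θ b v) (permB C θ b w) = vdist C v w := by
  change ((act C θ v.1 b).length + (act C θ w.1 b).length - 2 * lcp (act C θ v.1 b) (act C θ w.1 b)
    : ℤ) = _
  rw [length_act, length_act, lcp_act, vdist]

theorem lcp_one_cons (l m : List (B ⧸ C)) (h : ∀ q ∈ m, q ≠ ((1 : B) : B ⧸ C)) :
    lcp (((1 : B) : B ⧸ C) :: l) m = 0 := by
  cases m with
  | nil => simp
  | cons q m => exact lcp_cons_ne (h q (by simp)).symm _ _

theorem vdist_flipV (v w : Vert C) : vdist C (permS C v) (permS C w) = vdist C v w := by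
  change ((flip C v.1).length + (flip C w.1).length - 2 * lcp (flip C v.1) (flip C w.1) : ℤ) = _
  rw [vdist]
  rcases vert_cases C v with ⟨l, hv, hl⟩ | h <;> rcases vert_cases C w with ⟨m, hw, hm⟩ | h'
  · rw [hv, hw, flip_one_cons, flip_one_cons, lcp_cons_self]
    push_cast [List.length_cons]; ring
  · rw [hv, flip_one_cons, flip_of_ne C _ h', lcp_one_cons C _ _ h', lcp_comm,
      lcp_one_cons C _ _ hl]
    push_cast [List.length_cons]; ring
  · rw [hw, flip_one_cons, flip_of_ne C _ h, lcp_one_cons C _ _ hm, lcp_comm v.1,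
      lcp_one_cons C _ _ h]
    push_cast [List.length_cons]; ring
  · rw [flip_of_ne C _ h, flip_of_ne C _ h', lcp_cons_self]
    push_cast [List.length_cons]; ring

/-- The base vertex. -/
def root : Vert C := ⟨[], by simp⟩

/-- A group generated by the image of `B` and an involution `σ` which acts on the image of `C` by
conjugation through `θ`, together with a compatible action on the vertices of the tree. -/
structure TreeAction (Γ : Type*) [Group Γ] where
  ι : B →* Γ
  σ : Γ
  φ : Γ →* Equiv.Perm (Vert C)
  φ_ι : ∀ b, φ (ι b) = permB C θ b
  φ_σ : φ σ = permS C
  σ_sq : σ * σ = 1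
  σ_conj : ∀ c : C, σ * ι c * σ = ι (θ c)
  gen : Subgroup.closure (Set.range ι ∪ {σ}) = ⊤

variable {C θ} {Γ : Type*} [Group Γ] (A : TreeAction C θ Γ)

namespace TreeAction

theorem induct {p : Γ → Prop} (h1 : p 1) (hι : ∀ b g, p g → p (A.ι b * g))
    (hσ : ∀ g, p g → p (A.σ * g)) (g : Γ) : p g := by
  have hinv : A.σ⁻¹ = A.σ := inv_eq_of_mul_eq_one_left A.σ_sq
  have hg : g ∈ Subgroup.closure (Set.range A.ι ∪ {A.σ}) := by rw [A.gen]; trivial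
  induction hg using Subgroup.closure_induction_left with
  | one => exact h1
  | mul_left x hx y _ ih =>
    rcases hx with ⟨b, rfl⟩ | rfl
    · exact hι b y ih
    · exact hσ y ih
  | inv_mul_cancel x hx y _ ih =>
    rcases hx with ⟨b, rfl⟩ | rfl
    · rw [← map_inv]; exact hι _ y ih
    · rw [hinv]; exact hσ y ih

theorem vdist_φ (g : Γ) (v w : Vert C) : vdist C (A.φ g v) (A.φ g w) = vdist C v w := by
  refine A.induct (p := fun g => vdist C (A.φ g v) (A.φ g w) = vdist C v w) ?_ ?_ ?_ g
  · simp
  · intro b g ih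
    rw [map_mul, A.φ_ι, Equiv.Perm.mul_apply, Equiv.Perm.mul_apply, vdist_actV, ih]
  · intro g ih
    rw [map_mul, A.φ_σ, Equiv.Perm.mul_apply, Equiv.Perm.mul_apply, vdist_flipV, ih]

/-- An element moving the base vertex to a given vertex. -/
noncomputable def sec : List (B ⧸ C) → Γ
  | [] => 1
  | q :: l => A.ι (rep C q) * A.σ * sec l

theorem ι_mul_sec (l : List (B ⧸ C)) (b : B) :
    ∃ b', A.ι b * A.sec l = A.sec (act C θ l b) * A.ι b' := by
  induction l generalizing b with
  | nil => exact ⟨b, by simp [sec, act]⟩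
  | cons q l ih =>
    obtain ⟨b', hb'⟩ := ih (θ (cocyc C b q) : C)
    refine ⟨b', ?_⟩
    simp only [sec, act]
    rw [mul_assoc _ _ (A.ι b'), ← hb', ← A.σ_conj]
    calc A.ι b * (A.ι (rep C q) * A.σ * A.sec l)
        = A.ι (b * rep C q) * A.σ * A.sec l := by simp [mul_assoc]
      _ = A.ι (rep C (b • q)) * (A.σ * A.σ) * A.ι (cocyc C b q) * A.σ * A.sec l := by
          rw [cocyc_spec, A.σ_sq]; simp [mul_assoc]
      _ = _ := by simp only [mul_assoc]

theorem exists_sec (g : Γ) : ∃ b, g = A.sec (A.φ g (root C)).1 * A.ι b := by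
  refine A.induct (p := fun g => ∃ b, g = A.sec (A.φ g (root C)).1 * A.ι b) ?_ ?_ ?_ g
  · exact ⟨1, by rw [map_one, map_one, mul_one]; rfl⟩
  · rintro b g ⟨b', hb'⟩
    obtain ⟨b'', h⟩ := A.ι_mul_sec (A.φ g (root C)).1 b
    refine ⟨b'' * b', ?_⟩
    rw [map_mul A.φ, A.φ_ι, Equiv.Perm.mul_apply]
    change A.ι b * g = A.sec (act C θ (A.φ g (root C)).1 b) * _
    rw [map_mul, ← mul_assoc, ← h, mul_assoc, ← hb']
  · rintro g ⟨b', hb'⟩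
    refine ⟨b', ?_⟩
    rw [map_mul A.φ, A.φ_σ, Equiv.Perm.mul_apply]
    change A.σ * g = A.sec (flip C (A.φ g (root C)).1) * _
    generalize A.φ g (root C) = v at hb' ⊢
    rw [hb']
    rcases vert_cases C v with ⟨l, hv, hl⟩ | h
    · rw [hv, flip_one_cons]
      simp only [sec, rep_one, map_one, one_mul]
      rw [← mul_assoc, ← mul_assoc, A.σ_sq, one_mul]
    · rw [flip_of_ne C _ h]
      simp [sec, rep_one, mul_assoc]

/-- Distances in the tree from the base vertex. -/
noncomputable def treeLength : TreeLength Γ where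
  L g := (A.φ g (root C)).1.length
  K g h := lcp (A.φ g (root C)).1 (A.φ h (root C)).1
  len_one := by rw [map_one]; rfl
  len_inv_mul g h := by
    have h1 := A.vdist_φ g (root C) (A.φ (g⁻¹ * h) (root C))
    rw [← Equiv.Perm.mul_apply, ← map_mul, mul_inv_cancel_left] at h1
    simp only [vdist, root, lcp_nil_left, List.length_nil] at h1 ⊢
    omega
  K_comm g h := lcp_comm _ _
  K_le_left g h := lcp_le _ _
  ultra g h k := lcp_ultra _ _ _

theorem len_eq_zero {g : Γ} : A.treeLength.L g = 0 ↔ ∃ b, A.ι b = g := by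
  constructor
  · intro h
    obtain ⟨b, hb⟩ := A.exists_sec g
    have h' : (A.φ g (root C)).1 = [] := List.length_eq_zero_iff.1 h
    rw [h'] at hb
    exact ⟨b, by rw [hb]; simp [sec]⟩
  · rintro ⟨b, rfl⟩
    change (A.φ (A.ι b) (root C)).1.length = 0
    rw [A.φ_ι]; rfl

theorem φ_ι_σ (b : B) : (A.φ (A.ι b * A.σ) (root C)).1 = [((b : B) : B ⧸ C)] := by
  rw [map_mul, A.φ_ι, A.φ_σ, Equiv.Perm.mul_apply]
  change act C θ [((1 : B) : B ⧸ C)] b = _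
  simp [act]

/-- The tree of the action, with its single orbit of edges. -/
noncomputable def edgeTree : EdgeTree Γ where
  toTreeLength := A.treeLength
  σ := A.σ
  C := C.map A.ι
  σ_sq := A.σ_sq
  len_σ := by
    have := A.φ_ι_σ 1
    rw [map_one, one_mul] at this
    change (A.φ A.σ (root C)).1.length = 1
    rw [this]; rfl
  nbr g hg := by
    change 0 < (A.φ g (root C)).1.length at hg
    obtain ⟨q, l, hql⟩ := List.exists_cons_of_length_pos hg
    refine ⟨A.ι (rep C q), A.len_eq_zero.2 ⟨_, rfl⟩, ?_⟩
    change 0 < lcp _ _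
    rw [φ_ι_σ, hql, mk_rep, lcp_cons_self]
    omega
  edge b hb h := by
    obtain ⟨b, rfl⟩ := A.len_eq_zero.1 hb
    change 0 < lcp _ _ at h
    have := A.φ_ι_σ 1
    rw [map_one, one_mul] at this
    rw [this, φ_ι_σ] at h
    refine ⟨b, ?_, rfl⟩
    change b ∈ C
    by_contra hbC
    rw [lcp_cons_ne] at h
    · omega
    · intro h'; exact hbC ((mk_eq_one C).1 h'.symm)
  len_C := by
    rintro _ ⟨b, _, rfl⟩
    exact A.len_eq_zero.2 ⟨_, rfl⟩
  conj_C := by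
    rintro _ ⟨b, hb, rfl⟩
    refine ⟨(θ ⟨b, hb⟩ : C), (θ ⟨b, hb⟩).2, ?_⟩
    exact (A.σ_conj ⟨b, hb⟩).symm

/-- The kernel of `ι` acts trivially on the neighbours of the base vertex, so all conjugates of its
elements lie in `C`. -/
theorem fix_of_ι_eq_one {b : B} (hb : A.ι b = 1) (x : B) : x⁻¹ * b * x ∈ C := by
  have h := A.φ_ι_σ (b * x)
  rw [map_mul A.ι, hb, one_mul, φ_ι_σ] at h
  have h' := QuotientGroup.eq.1 (List.singleton_injective h)
  rwa [← mul_assoc] at h'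

end TreeAction

end dist

end BassSerre

/-! ### Free products of a cyclic group with a group of order two -/

namespace TreeLength

variable {Γ : Type*} [Group Γ] (T : TreeLength Γ)

/-- The positive powers of a hyperbolic element of length one all leave the base vertex along
the same edge. -/
theorem K_pow_pos {g : Γ} (hg : T.L g = 1) (h : T.K g g⁻¹ = 0) (k : ℕ) :
    0 < T.K g (g ^ (k + 1)) := by
  induction k with
  | zero => simp [K_self, hg]
  | succ k ih =>
    have e1 := T.ultra g⁻¹ (g ^ (k + 1)) g
    have e2 := T.K_comm g (g ^ (k + 1))
    have e3 := T.K_comm g g⁻¹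
    have e4 := T.len_mul g (g ^ (k + 1))
    have e5 := T.len_inv_mul g (g * g ^ (k + 1))
    rw [inv_mul_cancel_left] at e5
    rw [pow_succ' g (k + 1)]
    omega

end TreeLength

namespace FreeProd

open TreeLength

variable {Γ : Type*} [Group Γ] (E : EdgeTree Γ) (t : Γ)
  (hbase : ∀ g, E.L g = 0 ↔ g ∈ Subgroup.zpowers t) (hC : E.C = ⊥) (ht : t * t ≠ 1)

include hC in
/-- With trivial edge group, distinct elements of the base group give distinct edges at the base
vertex. -/
theorem K_dir {p p' q q' : Γ} (hp : E.L p = 0) (hp' : E.L p' = 0) (hq : E.L q = 0)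
    (hq' : E.L q' = 0) (hne : p ≠ p') : E.K (p * E.σ * q) (p' * E.σ * q') = 0 := by
  rw [K_mul_right hq, K_mul_right' hq']
  by_contra h
  have hpi : E.L p⁻¹ = 0 := by rw [E.len_inv, hp]
  have h1 := E.edge (p⁻¹ * p') (by rw [len_mul_left hpi, hp']) (by
    rw [← K_mul_left hp, show p * (p⁻¹ * p' * E.σ) = p' * E.σ by group]; omega)
  rw [hC, Subgroup.mem_bot, inv_mul_eq_one] at h1
  exact hne h1

theorem len_dir {p q : Γ} (hp : E.L p = 0) (hq : E.L q = 0) : E.L (p * E.σ * q) = 1 := by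
  rw [len_mul_right hq, len_mul_left hp, E.len_σ]

include hbase

theorem len_t : E.L t = 0 := (hbase t).2 (Subgroup.mem_zpowers t)

theorem len_c : E.L (t * E.σ) = 1 := by
  rw [len_mul_left (len_t E t hbase), E.len_σ]

omit hbase in
theorem inv_c : (t * E.σ)⁻¹ = 1 * E.σ * t⁻¹ := by rw [mul_inv_rev, E.σ_inv, one_mul]

theorem len_t_inv : E.L t⁻¹ = 0 := by rw [E.len_inv, len_t E t hbase]

include hC ht

omit hC hbase in
theorem t_ne_one : t ≠ 1 := by rintro rfl; simp at ht

theorem K_c : E.K (t * E.σ) (t * E.σ)⁻¹ = 0 := by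
  have h := K_dir E hC (len_t E t hbase) E.len_one E.len_one (len_t_inv E t hbase)
    (t_ne_one t ht)
  rwa [mul_one, ← inv_c E t] at h

/-- The generators `c = tσ` and `b⁻¹cb` are Nielsen reduced if `b` has positive length, minimal in
its double coset of `⟨c⟩`. -/
theorem free_of_pos {b : Γ} (hb : 0 < E.L b)
    (hmin : ∀ i j : ℤ, E.L b ≤ E.L ((t * E.σ) ^ i * b * (t * E.σ) ^ j))
    (w : FreeGroup (Fin 2)) (hw : w ≠ 1) :
    0 < E.L (FreeGroup.lift ![t * E.σ, b⁻¹ * (t * E.σ) * b] w) := by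
  have lc := len_c E t hbase
  have kc := K_c E t hbase hC ht
  set c := t * E.σ
  have m1 := hmin (-1) 0
  have m2 := hmin 1 0
  have m3 := hmin 0 1
  have m4 := hmin 0 (-1)
  simp only [zpow_neg, zpow_one, zpow_zero, one_mul, mul_one] at m1 m2 m3 m4
  have kc' := E.K_comm c c⁻¹
  have li := E.len_inv c
  have lb := E.len_inv b
  have d1 := E.len_mul c⁻¹ b
  have d2 := E.len_mul c b
  have d3 := E.len_mul b c
  have d4 := E.len_mul b c⁻¹
  rw [inv_inv] at d1
  have b1 : E.K c b = 0 := by omega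
  have b2 : E.K c⁻¹ b = 0 := by omega
  have b3 : E.K b⁻¹ c = 0 := by omega
  have b4 : E.K b⁻¹ c⁻¹ = 0 := by omega
  set x := b⁻¹ * c * b with hx
  have hxi : x⁻¹ = b⁻¹ * c⁻¹ * b := by rw [hx]; group
  have f1 := E.len_inv_mul c (c * b)
  have f2 := E.len_inv_mul c⁻¹ (c⁻¹ * b)
  rw [inv_mul_cancel_left] at f1 f2
  have f3 := E.ultra b (c * b) c
  rw [E.K_comm (c * b) c, E.K_comm b c] at f3
  have f5 := E.len_inv_mul b (c * b)
  rw [← mul_assoc, ← hx] at f5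
  have lx : E.L x = 2 * E.L b + 1 := by omega
  have lxi := E.len_inv x
  have g1 := E.len_inv_mul x b⁻¹
  rw [show x⁻¹ * b⁻¹ = (c * b)⁻¹ by rw [hx]; group, E.len_inv (c * b)] at g1
  have g2 := E.len_inv_mul x⁻¹ b⁻¹
  rw [show x⁻¹⁻¹ * b⁻¹ = (c⁻¹ * b)⁻¹ by rw [hx]; group, E.len_inv (c⁻¹ * b)] at g2
  have g3 := E.len_inv_mul x x⁻¹
  have g4 := E.len_inv_mul (c * b) (c⁻¹ * b)
  rw [show (c * b)⁻¹ * (c⁻¹ * b) = x⁻¹ * x⁻¹ by rw [hx]; group] at g4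
  have g5 := E.ultra c (c * b) (c⁻¹ * b)
  have g6 := E.ultra c (c⁻¹ * b) c⁻¹
  rw [E.K_comm (c⁻¹ * b) c⁻¹] at g6
  have kx : E.K x x⁻¹ = E.L b := by omega
  have kx' := E.K_comm x x⁻¹
  have u : ∀ e z : Γ, E.K b⁻¹ e = 0 → E.K z b⁻¹ = E.L b → E.K z e = 0 ∧ E.K e z = 0 := by
    intro e z h1 h2
    have := E.ultra b⁻¹ z e
    have h3 := E.K_comm z b⁻¹
    have h4 := E.K_comm z e
    omega
  have u1 := u c x b3 (by omega)
  have u2 := u c⁻¹ x b4 (by omega)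
  have u3 := u c x⁻¹ b3 (by omega)
  have u4 := u c⁻¹ x⁻¹ b4 (by omega)
  refine E.free_pos ![c, x] (fun p => if p.1 = 0 then 0 else E.L b) ?_ ?_ w hw
  · rintro ⟨i, e⟩ ⟨j, d⟩ hne
    fin_cases i <;> fin_cases j <;> cases e <;> cases d <;> simp [letter] at hne ⊢ <;> omega
  · rintro ⟨i, e⟩
    fin_cases i <;> cases e <;> simp [letter] <;> omega

/-- The generators `c = tσ` and `b⁻¹cb` are Nielsen reduced if `b` is in the base group and none of
`1`, `t`, `t⁻¹`; note that `t = cσ` and `t⁻¹ = σc⁻¹`. -/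
theorem free_of_zero {b : Γ} (hb : E.L b = 0) (h1 : b ≠ 1) (h2 : b ≠ t) (h3 : b ≠ t⁻¹)
    (w : FreeGroup (Fin 2)) (hw : w ≠ 1) :
    0 < E.L (FreeGroup.lift ![t * E.σ, b⁻¹ * (t * E.σ) * b] w) := by
  have lt := len_t E t hbase
  have lti := len_t_inv E t hbase
  have hb' : E.L b⁻¹ = 0 := by rw [E.len_inv, hb]
  have hti : E.L (t⁻¹ * b) = 0 := by rw [len_mul_left lti, hb]
  have hbt : E.L (b⁻¹ * t) = 0 := by rw [len_mul_left hb', lt]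
  have hcomm : Commute t b := by
    obtain ⟨i, rfl⟩ := (hbase b).1 hb
    exact (Commute.refl t).zpow_right i
  have n1 : b⁻¹ * t ≠ t := by simpa using h1
  have n2 : b⁻¹ * t ≠ 1 := by rw [Ne, inv_mul_eq_one]; exact h2
  have n4 : b⁻¹ ≠ t := by rw [Ne, inv_eq_iff_eq_inv]; exact h3
  have n6 := t_ne_one t ht
  -- every letter has length one, and the four letters leave the base vertex along distinct edges
  let P : Fin 2 × Bool → Γ := fun p => cond p.2 (![t, b⁻¹ * t] p.1) (![1, b⁻¹] p.1)
  let Q : Fin 2 × Bool → Γ := fun p => cond p.2 (![1, b] p.1) (![t⁻¹, t⁻¹ * b] p.1)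
  have hP : ∀ p, E.L (P p) = 0 := by
    rintro ⟨i, e⟩
    fin_cases i <;> cases e <;> simp [P, lt, hb', hbt, E.len_one]
  have hQ : ∀ p, E.L (Q p) = 0 := by
    rintro ⟨i, e⟩
    fin_cases i <;> cases e <;> simp [Q, lti, hb, hti, E.len_one]
  have hPQ : ∀ p, letter ![t * E.σ, b⁻¹ * (t * E.σ) * b] p = P p * E.σ * Q p := by
    rintro ⟨i, e⟩
    fin_cases i <;> cases e <;> simp [P, Q, letter, E.σ_inv, mul_assoc]
  have hinj : ∀ p q, p ≠ q → P p ≠ P q := by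
    rintro ⟨i, e⟩ ⟨j, d⟩ hne
    fin_cases i <;> fin_cases j <;> cases e <;> cases d <;>
      simp [P, n1, n2, n4, n6, n1.symm, n2.symm, n4.symm, n6.symm, h1] at hne ⊢
  refine E.free_pos ![t * E.σ, b⁻¹ * (t * E.σ) * b] (fun p => 0) ?_ ?_ w hw
  · intro p q hne
    rw [hPQ, hPQ, K_dir E hC (hP p) (hP q) (hQ p) (hQ q) (hinj p q hne)]
  · intro p
    rw [hPQ, len_dir E (hP p) (hQ p)]
    norm_num

/-- If `b` is not in `⟨c⟩ ∪ ⟨c⟩ σ ⟨c⟩`, where `c = tσ`, then `c` and its conjugate by `b` are free generators of a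
subgroup. -/
theorem injective_lift {b : Γ} (h1 : b ∉ Subgroup.zpowers (t * E.σ))
    (h2 : ∀ i j : ℤ, b ≠ (t * E.σ) ^ i * E.σ * (t * E.σ) ^ j) :
    Function.Injective (FreeGroup.lift ![t * E.σ, b⁻¹ * (t * E.σ) * b]) := by
  classical
  have hex : ∃ n, ∃ i j : ℤ, E.L ((t * E.σ) ^ i * b * (t * E.σ) ^ j) = n := ⟨_, 0, 0, rfl⟩
  obtain ⟨i, j, hij⟩ := Nat.find_spec hex
  have hmin : ∀ i' j' : ℤ, E.L ((t * E.σ) ^ i * b * (t * E.σ) ^ j) ≤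
      E.L ((t * E.σ) ^ i' * ((t * E.σ) ^ i * b * (t * E.σ) ^ j) * (t * E.σ) ^ j') := by
    intro i' j'
    rw [hij]
    refine Nat.find_min' hex ⟨i' + i, j + j', ?_⟩
    congr 1
    rw [zpow_add, zpow_add]; group
  clear hij
  set b' := (t * E.σ) ^ i * b * (t * E.σ) ^ j with hb'
  have hb : b = (t * E.σ) ^ (-i) * b' * (t * E.σ) ^ (-j) := by rw [hb']; group
  have hpos : ∀ w : FreeGroup (Fin 2), w ≠ 1 →
      0 < E.L (FreeGroup.lift ![t * E.σ, b'⁻¹ * (t * E.σ) * b'] w) := by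
    rcases Nat.eq_zero_or_pos (E.L b') with h0 | h0
    · refine free_of_zero E t hbase hC ht h0 ?_ ?_ ?_
      · intro h
        apply h1
        rw [hb, h, mul_one, ← zpow_add]
        exact ⟨_, rfl⟩
      · intro h
        apply h2 (-i + 1) (-j)
        rw [hb, h, zpow_add, zpow_one, mul_assoc _ (t * E.σ) E.σ, mul_assoc t, E.σ_sq, mul_one]
      · intro h
        apply h2 (-i) (-1 - j)
        rw [hb, h, sub_eq_add_neg, zpow_add, zpow_neg_one, mul_inv_rev, E.σ_inv]
        rw [mul_assoc _ E.σ, ← mul_assoc E.σ (E.σ * t⁻¹), ← mul_assoc E.σ E.σ, E.σ_sq, one_mul,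
          mul_assoc]
    · exact free_of_pos E t hbase hC ht h0 hmin
  have hconj : FreeGroup.lift ![t * E.σ, b⁻¹ * (t * E.σ) * b] =
      (MulAut.conj ((t * E.σ) ^ j)).toMonoidHom.comp
        (FreeGroup.lift ![t * E.σ, b'⁻¹ * (t * E.σ) * b']) := by
    rw [hb']
    generalize t * E.σ = c
    ext k
    fin_cases k
    · simp only [FreeGroup.lift_apply_of, MonoidHom.comp_apply]
      change c = c ^ j * c * (c ^ j)⁻¹
      group
    · simp only [FreeGroup.lift_apply_of, MonoidHom.comp_apply]
      change b⁻¹ * c * b = c ^ j * ((c ^ i * b * c ^ j)⁻¹ * c * (c ^ i * b * c ^ j)) * (c ^ j)⁻¹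
      group
  rw [injective_iff_map_eq_one]
  intro w hw
  by_contra hne
  have h3 := hpos w hne
  rw [hconj] at hw
  simp only [MonoidHom.comp_apply, MulEquiv.toMonoidHom_eq_coe, MonoidHom.coe_coe,
    EmbeddingLike.map_eq_one_iff] at hw
  rw [hw, E.len_one] at h3
  exact lt_irrefl _ h3

/-- In a free group the two basis elements are not conjugate, whereas `b` conjugates `c = tσ` to
the other generator of the subgroup. -/
theorem not_mem_closure {b : Γ} (h1 : b ∉ Subgroup.zpowers (t * E.σ))
    (h2 : ∀ i j : ℤ, b ≠ (t * E.σ) ^ i * E.σ * (t * E.σ) ^ j) :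
    b ∉ Subgroup.closure {t * E.σ, b⁻¹ * (t * E.σ) * b} := by
  intro hb
  have hinj := injective_lift E t hbase hC ht h1 h2
  have hr : b ∈ (FreeGroup.lift ![t * E.σ, b⁻¹ * (t * E.σ) * b]).range := by
    rw [FreeGroup.range_lift_eq_closure]
    simpa [Set.pair_comm] using hb
  obtain ⟨w, hw⟩ := hr
  have h3 : (FreeGroup.of 1 : FreeGroup (Fin 2)) = w⁻¹ * FreeGroup.of 0 * w := by
    apply hinj
    simp [hw]
  have h4 := congrArg (FreeGroup.lift ![(1 : Multiplicative ℤ), Multiplicative.ofAdd 1]) h3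
  simp at h4

/-- No positive power of `σt = σ(tσ)σ` is a power of `tσ`: the axes leave the base vertex along
different edges. -/
theorem flip_pow_ne (k : ℕ) (j : ℤ) : (E.σ * t) ^ (k + 1) ≠ (t * E.σ) ^ j := by
  intro h
  have l0 := len_t E t hbase
  have li := len_t_inv E t hbase
  have l1 := E.len_one
  have hy : E.σ * t = 1 * E.σ * t := by rw [one_mul]
  have hyi : (E.σ * t)⁻¹ = t⁻¹ * E.σ * 1 := by rw [mul_inv_rev, E.σ_inv, mul_one]
  have hc : t * E.σ = t * E.σ * 1 := by rw [mul_one]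
  have ht1 := t_ne_one t ht
  have ky : E.K (E.σ * t) (E.σ * t)⁻¹ = 0 := by
    rw [hyi, hy]
    exact K_dir E hC l1 li l0 l1 (by simpa using ht1)
  have ly : E.L (E.σ * t) = 1 := by rw [hy, len_dir E l1 l0]
  have k1 : E.K (E.σ * t) (t * E.σ) = 0 := by
    rw [hy, hc]
    exact K_dir E hC l1 l0 l0 l1 ht1.symm
  have k2 : E.K (E.σ * t)⁻¹ (t * E.σ) = 0 := by
    rw [hyi, hc]
    refine K_dir E hC li l0 l1 l1 ?_
    rw [Ne, inv_eq_iff_mul_eq_one]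
    exact ht
  have p1 := E.K_pow_pos ly ky k
  have p2 := E.K_pow_pos (g := (E.σ * t)⁻¹) (by rw [E.len_inv, ly])
    (by rw [inv_inv, E.K_comm, ky]) k
  have pc := E.K_pow_pos (len_c E t hbase) (K_c E t hbase hC ht)
  rw [inv_pow] at p2
  rw [h] at p1 p2
  rcases j with (_ | j) | j
  · rw [Int.ofNat_eq_natCast, Nat.cast_zero, zpow_zero] at p1
    have := E.K_le_right (E.σ * t) 1
    omega
  · rw [Int.ofNat_eq_natCast, zpow_natCast] at p1
    have e1 := E.ultra (E.σ * t) ((t * E.σ) ^ (j + 1)) (t * E.σ)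
    have e2 := pc j
    rw [E.K_comm] at e2
    omega
  · rw [zpow_negSucc, inv_inv] at p2
    have e1 := E.ultra (E.σ * t)⁻¹ ((t * E.σ) ^ (j + 1)) (t * E.σ)
    have e2 := pc j
    rw [E.K_comm] at e2
    omega

/-- The subgroup generated by `c = tσ` is malnormal. -/
theorem malnormal {b : Γ} {i : ℤ} (hi : (t * E.σ) ^ i ≠ 1)
    (h : b⁻¹ * (t * E.σ) ^ i * b ∈ Subgroup.zpowers (t * E.σ)) :
    b ∈ Subgroup.zpowers (t * E.σ) := by
  by_contra h1
  by_cases h2 : ∀ i j : ℤ, b ≠ (t * E.σ) ^ i * E.σ * (t * E.σ) ^ j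
  · have hinj := injective_lift E t hbase hC ht h1 h2
    obtain ⟨j, hj⟩ := h
    have h3 : (FreeGroup.of 1 : FreeGroup (Fin 2)) ^ i = FreeGroup.of 0 ^ j := by
      apply hinj
      simp only [map_zpow, FreeGroup.lift_apply_of]
      simp only [Matrix.cons_val_one, Matrix.cons_val_zero]
      simp only at hj
      rw [hj]
      have := @conj_zpow _ _ i b⁻¹ (t * E.σ)
      rwa [inv_inv] at this
    have h4 := congrArg (FreeGroup.lift ![(1 : Multiplicative ℤ), Multiplicative.ofAdd 1]) h3
    simp [← ofAdd_zsmul] at h4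
    rw [h4] at hi
    simp at hi
  · push Not at h2
    obtain ⟨p, q, rfl⟩ := h2
    obtain ⟨j, hj⟩ := h
    have h3 : (E.σ * t) ^ i = (t * E.σ) ^ j := by
      have e := @conj_zpow _ _ i E.σ (t * E.σ)
      rw [E.σ_inv, mul_assoc, mul_assoc, E.σ_sq, mul_one] at e
      rw [e]
      simp only at hj
      have hs := E.σ_inv
      generalize t * E.σ = c at hj ⊢
      generalize E.σ = a at hj hs ⊢
      calc a * c ^ i * a = c ^ q * ((c ^ p * a * c ^ q)⁻¹ * c ^ i * (c ^ p * a * c ^ q)) * (c ^ q)⁻¹ := by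
            nth_rewrite 1 [← hs]
            group
        _ = c ^ j := by rw [← hj]; group
    rcases i with (_ | i) | i
    · simp at hi
    · exact flip_pow_ne E t hbase hC ht i j (by rw [← h3, Int.ofNat_eq_natCast, zpow_natCast])
    · apply flip_pow_ne E t hbase hC ht i (-j)
      rw [zpow_negSucc, inv_eq_iff_eq_inv] at h3
      rw [h3, zpow_neg]

end FreeProd

open BassSerre

namespace FreeProd

/-- The homomorphism from a cyclic group sending the generator to `x`. -/
noncomputable def zhom {Γ : Type*} [Group Γ] (n : ℕ) (x : Γ) (hx : x ^ n = 1) :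
    Multiplicative (ZMod n) →* Γ :=
  AddMonoidHom.toMultiplicativeLeft (ZMod.lift n ⟨zmultiplesHom (Additive Γ) (Additive.ofMul x), by
    rw [zmultiplesHom_apply, natCast_zsmul, ← ofMul_pow, hx]; rfl⟩)

theorem zhom_one {Γ : Type*} [Group Γ] (n : ℕ) (x : Γ) (hx : x ^ n = 1) :
    zhom n x hx (Multiplicative.ofAdd 1) = x := by
  have h := ZMod.lift_coe n (⟨zmultiplesHom (Additive Γ) (Additive.ofMul x), by
    rw [zmultiplesHom_apply, natCast_zsmul, ← ofMul_pow, hx]; rfl⟩ :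
      { f : ℤ →+ Additive Γ // f n = 0 }) 1
  rw [Int.cast_one] at h
  have h' := congrArg Additive.toMul h
  simp at h'
  exact h'

theorem exists_zpow {n : ℕ} (z : Multiplicative (ZMod n)) :
    ∃ i : ℤ, z = Multiplicative.ofAdd 1 ^ i := by
  obtain ⟨i, hi⟩ := ZMod.intCast_surjective (Multiplicative.toAdd z)
  refine ⟨i, ?_⟩
  rw [← ofAdd_zsmul, zsmul_one, hi]; rfl

theorem zmod_hom_ext {Γ : Type*} [Group Γ] {n : ℕ} {f g : Multiplicative (ZMod n) →* Γ}
    (h : f (Multiplicative.ofAdd 1) = g (Multiplicative.ofAdd 1)) : f = g := by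
  refine MonoidHom.ext fun z => ?_
  obtain ⟨i, rfl⟩ := exists_zpow z
  rw [map_zpow, map_zpow, h]

/-- The free product of cyclic groups of orders `n` and `2`. -/
abbrev Z2 (n : ℕ) : Type := Monoid.Coprod (Multiplicative (ZMod n)) (Multiplicative (ZMod 2))

/-- The generator of order `n`. -/
def gt (n : ℕ) : Z2 n := Monoid.Coprod.inl (Multiplicative.ofAdd 1)

/-- The generator of order two. -/
def ga (n : ℕ) : Z2 n := Monoid.Coprod.inr (Multiplicative.ofAdd 1)

theorem ofAdd_one_pow (n : ℕ) : (Multiplicative.ofAdd 1 : Multiplicative (ZMod n)) ^ n = 1 := by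
  rw [← ofAdd_nsmul]; simp

theorem gt_pow (n : ℕ) : gt n ^ n = 1 := by
  rw [gt, ← map_pow, ofAdd_one_pow, map_one]

theorem ga_sq (n : ℕ) : ga n * ga n = 1 := by
  rw [← pow_two, ga, ← map_pow, ofAdd_one_pow, map_one]

/-- The Bass–Serre tree of the free product, as a tree with base group `⟨t⟩`. -/
noncomputable def actFree (n : ℕ) :
    TreeAction (⊥ : Subgroup (Multiplicative (ZMod n))) (MonoidHom.id _) (Z2 n) where
  ι := Monoid.Coprod.inl
  σ := ga n
  φ := Monoid.Coprod.lift (permB ⊥ (MonoidHom.id _)) (zhom 2 (permS ⊥) (by rw [pow_two, permS_mul_self]))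
  φ_ι b := by simp
  φ_σ := by rw [ga, Monoid.Coprod.lift_apply_inr, zhom_one]
  σ_sq := ga_sq n
  σ_conj := by
    rintro ⟨c, hc⟩
    rw [Subgroup.mem_bot] at hc
    subst hc
    simp [ga_sq]
  gen := by
    rw [eq_top_iff, ← Monoid.Coprod.closure_range_inl_union_inr, Subgroup.closure_le]
    rintro x (⟨z, rfl⟩ | ⟨z, rfl⟩)
    · exact Subgroup.subset_closure (Or.inl ⟨z, rfl⟩)
    · obtain ⟨i, rfl⟩ := exists_zpow z
      have h : ga n ∈ Subgroup.closure (Set.range (Monoid.Coprod.inl (N := Multiplicative (ZMod 2)) :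
          Multiplicative (ZMod n) →* Z2 n) ∪ {ga n}) := Subgroup.subset_closure (Or.inr rfl)
      rw [map_zpow]
      exact zpow_mem h i

section facts

variable {n : ℕ} (hn : 3 ≤ n)

theorem free_base (g : Z2 n) : (actFree n).edgeTree.L g = 0 ↔ g ∈ Subgroup.zpowers (gt n) := by
  refine (actFree n).len_eq_zero.trans ⟨?_, ?_⟩
  · rintro ⟨z, rfl⟩
    obtain ⟨i, rfl⟩ := exists_zpow z
    rw [map_zpow]
    exact ⟨i, rfl⟩
  · rintro ⟨i, rfl⟩
    exact ⟨Multiplicative.ofAdd 1 ^ i, map_zpow _ _ _⟩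

theorem free_C : (actFree n).edgeTree.C = ⊥ := Subgroup.map_bot _

include hn in
theorem gt_sq : gt n * gt n ≠ 1 := by
  intro h
  have h1 := congrArg Monoid.Coprod.fst h
  rw [map_mul, map_one, gt, Monoid.Coprod.fst_apply_inl] at h1
  have h2 : ((2 : ℕ) : ZMod n) = 0 := by
    have := congrArg Multiplicative.toAdd h1
    push_cast
    rw [← one_add_one_eq_two]
    exact this
  rw [ZMod.natCast_eq_zero_iff] at h2
  have := Nat.le_of_dvd (by norm_num) h2
  omega

include hn

theorem Z2_not_mem {b : Z2 n} (h1 : b ∉ Subgroup.zpowers (gt n * ga n))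
    (h2 : ∀ i j : ℤ, b ≠ (gt n * ga n) ^ i * ga n * (gt n * ga n) ^ j) :
    b ∉ Subgroup.closure {gt n * ga n, b⁻¹ * (gt n * ga n) * b} :=
  not_mem_closure (actFree n).edgeTree (gt n) free_base free_C (gt_sq hn) h1 h2

theorem Z2_malnormal {b c : Z2 n} (hc : c ∈ Subgroup.zpowers (gt n * ga n)) (hc1 : c ≠ 1)
    (h : b⁻¹ * c * b ∈ Subgroup.zpowers (gt n * ga n)) : b ∈ Subgroup.zpowers (gt n * ga n) := by
  obtain ⟨i, rfl⟩ := hc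
  exact malnormal (actFree n).edgeTree (gt n) free_base free_C (gt_sq hn) hc1 h

theorem gt_not_mem : gt n ∉ Subgroup.zpowers (gt n * ga n) := by
  rintro ⟨i, hi⟩
  set E := (actFree n).edgeTree with hE
  have h0 : E.L (gt n) = 0 := (free_base _).2 (Subgroup.mem_zpowers _)
  have hpos := E.K_pow_pos (len_c E (gt n) free_base)
    (K_c E (gt n) free_base free_C (gt_sq hn))
  change ∀ k, 0 < E.K (gt n * ga n) ((gt n * ga n) ^ (k + 1)) at hpos
  simp only at hi
  rcases i with (_ | i) | i
  · rw [Int.ofNat_eq_natCast, Nat.cast_zero, zpow_zero] at hi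
    exact t_ne_one _ (gt_sq hn) hi.symm
  · rw [Int.ofNat_eq_natCast, zpow_natCast] at hi
    have h1 := hpos i
    have h2 := E.K_le_right (gt n * ga n) ((gt n * ga n) ^ (i + 1))
    rw [hi] at h1 h2
    omega
  · rw [zpow_negSucc, inv_eq_iff_eq_inv] at hi
    have h1 := hpos i
    have h2 := E.K_le_right (gt n * ga n) ((gt n * ga n) ^ (i + 1))
    rw [hi] at h1 h2
    rw [E.len_inv] at h2
    omega

end facts

end FreeProd

/-! ### The orbifold group and its tree -/

namespace Sph

open FreeProd

variable (l : ℕ)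

/-- The group of the orbifold. -/
abbrev G : Type := PresentedGroup (sphRels l)

/-- The standard generators, indexed from `0`. -/
abbrev s (i : Fin 4) : G l := PresentedGroup.of i

variable {l} in
/-- The homomorphism determined by images of the generators satisfying the relations. -/
def hom {H : Type*} [Group H] (x : Fin 4 → H) (h0 : x 0 ^ 2 = 1) (h1 : x 1 ^ 2 = 1)
    (h2 : x 2 ^ 2 = 1) (h3 : x 3 ^ (2 * l + 1) = 1) (h4 : x 0 * x 1 * x 2 * x 3 = 1) : G l →* H :=
  PresentedGroup.toGroup (f := x) (by
    rintro r (rfl | rfl | rfl | rfl | rfl) <;> simp [*])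

theorem hom_s {H : Type*} [Group H] (x : Fin 4 → H) (h0 : x 0 ^ 2 = 1) (h1 : x 1 ^ 2 = 1)
    (h2 : x 2 ^ 2 = 1) (h3 : x 3 ^ (2 * l + 1) = 1) (h4 : x 0 * x 1 * x 2 * x 3 = 1) (i : Fin 4) :
    hom x h0 h1 h2 h3 h4 (s l i) = x i := PresentedGroup.toGroup.of _

theorem s0_sq : s l 0 * s l 0 = 1 := by
  rw [← pow_two]
  exact PresentedGroup.one_of_mem (x := FreeGroup.of 0 ^ 2) (by simp [sphRels])

theorem s1_sq : s l 1 * s l 1 = 1 := by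
  rw [← pow_two]
  exact PresentedGroup.one_of_mem (x := FreeGroup.of 1 ^ 2) (by simp [sphRels])

theorem s2_sq : s l 2 * s l 2 = 1 := by
  rw [← pow_two]
  exact PresentedGroup.one_of_mem (x := FreeGroup.of 2 ^ 2) (by simp [sphRels])

theorem s3_pow : s l 3 ^ (2 * l + 1) = 1 :=
  PresentedGroup.one_of_mem (x := FreeGroup.of 3 ^ (2 * l + 1)) (by simp [sphRels])

theorem s_prod : s l 0 * s l 1 * s l 2 * s l 3 = 1 :=
  PresentedGroup.one_of_mem (x := FreeGroup.of 0 * FreeGroup.of 1 * FreeGroup.of 2 * FreeGroup.of 3)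
    (by simp [sphRels])

theorem s0_inv : (s l 0)⁻¹ = s l 0 := inv_eq_of_mul_eq_one_left (s0_sq l)
theorem s1_inv : (s l 1)⁻¹ = s l 1 := inv_eq_of_mul_eq_one_left (s1_sq l)
theorem s2_inv : (s l 2)⁻¹ = s l 2 := inv_eq_of_mul_eq_one_left (s2_sq l)

/-- The element `c` of the base group generating the edge group, mapped to `s₁s₂` by `ι`. -/
abbrev gc : Z2 (2 * l + 1) := gt _ * ga _

/-- Inversion on the edge group. -/
def θ : Subgroup.zpowers (gc l) →* Subgroup.zpowers (gc l) where
  toFun x := x⁻¹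
  map_one' := inv_one
  map_mul' := by
    rintro ⟨_, i, rfl⟩ ⟨_, j, rfl⟩
    ext
    simp [← zpow_add, ← zpow_neg, add_comm]

theorem θ_apply (c) : θ l c = c⁻¹ := rfl

/-- The inclusion of the base group, `t ↦ s₄⁻¹`, `a ↦ s₃`. -/
noncomputable def ι : Z2 (2 * l + 1) →* G l :=
  Monoid.Coprod.lift (zhom _ (s l 3)⁻¹ (by rw [inv_pow, s3_pow, inv_one]))
    (zhom 2 (s l 2) (by rw [pow_two, s2_sq]))

theorem ι_gt : ι l (gt _) = (s l 3)⁻¹ := by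
  rw [ι, gt, Monoid.Coprod.lift_apply_inl, zhom_one]

theorem ι_ga : ι l (ga _) = s l 2 := by
  rw [ι, ga, Monoid.Coprod.lift_apply_inr, zhom_one]

theorem ι_gc : ι l (gc l) = s l 0 * s l 1 := by
  rw [gc, map_mul, ι_gt, ι_ga]
  have h := s_prod l
  rw [mul_assoc (s l 0 * s l 1), mul_eq_one_iff_eq_inv, mul_inv_rev, s2_inv] at h
  exact h.symm

/-- The action of the orbifold group on the vertices: `s₁` flips an edge. -/
noncomputable def phi : G l →* Equiv.Perm (Vert (Subgroup.zpowers (gc l))) :=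
  hom ![permS _, permS _ * permB _ (θ l) (gc l), permB _ (θ l) (ga _),
      permB _ (θ l) (gt _)⁻¹]
    (by simp [pow_two, permS_mul_self])
    (by
      simp only [pow_two, Matrix.cons_val_one, Matrix.cons_val_zero]
      have h := permS_conj _ (θ l) (fun c => by simp [θ_apply]) ⟨gc l, Subgroup.mem_zpowers _⟩
      rw [← mul_assoc, h, ← map_mul]
      simp [θ_apply])
    (by
      change permB _ (θ l) (ga _) ^ 2 = 1
      rw [← map_pow, pow_two, ga_sq, map_one])
    (by
      change permB _ (θ l) (gt _)⁻¹ ^ (2 * l + 1) = 1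
      rw [← map_pow, inv_pow, gt_pow, inv_one, map_one])
    (by
      change permS _ * (permS _ * permB _ (θ l) (gc l)) * permB _ (θ l) (ga _) *
        permB _ (θ l) (gt _)⁻¹ = 1
      rw [← mul_assoc (permS _), permS_mul_self, one_mul, ← map_mul, ← map_mul, mul_assoc (gt _),
        ga_sq, mul_one, mul_inv_cancel, map_one])

theorem phi_ι (b : Z2 (2 * l + 1)) : phi l (ι l b) = permB _ (θ l) b := by
  rw [← MonoidHom.comp_apply]
  congr 1
  apply Monoid.Coprod.hom_ext
  · apply zmod_hom_ext
    change phi l (ι l (gt _)) = permB _ (θ l) (gt _)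
    rw [ι_gt, map_inv, phi, hom_s]
    change (permB _ (θ l) (gt _)⁻¹)⁻¹ = _
    rw [map_inv, inv_inv]
  · apply zmod_hom_ext
    change phi l (ι l (ga _)) = permB _ (θ l) (ga _)
    rw [ι_ga, phi, hom_s]
    rfl

/-- The orbifold group acting on the tree of its decomposition along `c`, the boundary of a
neighbourhood of an arc joining the first two cone points. -/
noncomputable def action : TreeAction (Subgroup.zpowers (gc l)) (θ l) (G l) where
  ι := ι l
  σ := s l 0
  φ := phi l
  φ_ι := phi_ι l
  φ_σ := by rw [phi, hom_s]; rfl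
  σ_sq := s0_sq l
  σ_conj := by
    rintro ⟨_, i, rfl⟩
    have e := @conj_zpow _ _ i (s l 0) (s l 0 * s l 1)
    rw [s0_inv, ← mul_assoc, s0_sq, one_mul] at e
    simp only [θ_apply, InvMemClass.coe_inv, map_inv, map_zpow, ι_gc]
    rw [← e, ← inv_zpow, mul_inv_rev, s1_inv, s0_inv]
  gen := by
    rw [eq_top_iff, ← PresentedGroup.closure_range_of, Subgroup.closure_le]
    have h0 : s l 0 ∈ Subgroup.closure (Set.range (ι l) ∪ {s l 0}) :=
      Subgroup.subset_closure (Or.inr rfl)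
    have hι : ∀ b, ι l b ∈ Subgroup.closure (Set.range (ι l) ∪ {s l 0}) :=
      fun b => Subgroup.subset_closure (Or.inl ⟨b, rfl⟩)
    rintro _ ⟨i, rfl⟩
    fin_cases i
    · exact h0
    · have := mul_mem h0 (hι (gc l))
      rwa [ι_gc, ← mul_assoc, s0_sq, one_mul] at this
    · have := hι (ga _)
      rwa [ι_ga] at this
    · have := inv_mem (hι (gt _))
      rwa [ι_gt, inv_inv] at this

/-- The tree of the orbifold group. -/
noncomputable def tree : EdgeTree (G l) := (action l).edgeTree

theorem tree_base {g : G l} : (tree l).L g = 0 ↔ ∃ b, ι l b = g := (action l).len_eq_zero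

theorem tree_σ : (tree l).σ = s l 0 := rfl

theorem tree_C : (tree l).C = Subgroup.zpowers (s l 0 * s l 1) := by
  rw [← ι_gc]; exact MonoidHom.map_zpowers _ _

variable {l} (hl : 1 ≤ l)
include hl

/-- An element of the kernel has all its conjugates in `⟨c⟩`, which malnormality excludes. -/
theorem ι_injective : Function.Injective (ι l) := by
  rw [injective_iff_map_eq_one]
  intro b hb
  have h := (action l).fix_of_ι_eq_one hb
  by_contra hb1
  have h1 := h 1
  simp only [inv_one, one_mul, mul_one] at h1
  exact gt_not_mem (by omega) (Z2_malnormal (by omega) h1 hb1 (h (gt _)))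

theorem tree_malnormal (b c : G l) (hb : (tree l).L b = 0) (hc : c ∈ (tree l).C) (hc1 : c ≠ 1)
    (h : b⁻¹ * c * b ∈ (tree l).C) : b ∈ (tree l).C := by
  obtain ⟨b, rfl⟩ := (tree_base l).1 hb
  obtain ⟨c, hc, rfl⟩ := hc
  obtain ⟨d, hd, hd'⟩ := h
  change (ι l) d = (ι l b)⁻¹ * ι l c * ι l b at hd'
  rw [← map_inv, ← map_mul, ← map_mul] at hd'
  have := ι_injective hl hd'
  subst this
  refine ⟨b, Z2_malnormal (by omega) hc ?_ hd, rfl⟩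
  rintro rfl
  exact hc1 (map_one _)

end Sph

/-! ### Nielsen moves and finite quotients -/

section nielsen

variable {G : Type*} [Group G] {g h a b : G}

theorem NielsenEquiv.move (H : NielsenEquiv g h a b) (ψ : FreeGroup (Fin 2) ≃* FreeGroup (Fin 2))
    {a' b' : G} (ha : FreeGroup.lift ![a, b] (ψ (FreeGroup.of 0)) = a')
    (hb : FreeGroup.lift ![a, b] (ψ (FreeGroup.of 1)) = b') : NielsenEquiv g h a' b' := by
  obtain ⟨φ, hφ⟩ := H
  refine ⟨ψ.trans φ, ?_⟩
  apply FreeGroup.ext_hom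
  intro i
  have key : ∀ w, FreeGroup.lift ![g, h] (φ w) = FreeGroup.lift ![a, b] w := by
    intro w; rw [hφ]; rfl
  change _ = FreeGroup.lift ![g, h] (φ (ψ (FreeGroup.of i)))
  rw [key]
  fin_cases i
  · simpa using ha.symm
  · simpa using hb.symm

theorem surjective_lift (hgen : Subgroup.closure {g, h} = ⊤) :
    Function.Surjective (FreeGroup.lift ![g, h]) := by
  rw [← MonoidHom.range_eq_top, FreeGroup.range_lift_eq_closure, ← hgen]
  congr 1
  simp [Set.pair_comm]

theorem closure_of_surjective (hs : Function.Surjective (FreeGroup.lift ![g, h])) :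
    Subgroup.closure {g, h} = ⊤ := by
  rw [← MonoidHom.range_eq_top, FreeGroup.range_lift_eq_closure] at hs
  rw [← hs]
  congr 1
  simp [Set.pair_comm]

theorem NielsenEquiv.closure_eq (hgen : Subgroup.closure {g, h} = ⊤) (H : NielsenEquiv g h a b) :
    Subgroup.closure {a, b} = ⊤ := by
  apply closure_of_surjective
  obtain ⟨φ, hφ⟩ := H
  rw [hφ]
  exact (surjective_lift hgen).comp φ.surjective

theorem NielsenEquiv.rfl' : NielsenEquiv g h g h := ⟨MulEquiv.refl _, by ext; rfl⟩

/-- Inverting the first generator. -/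
def invAut : FreeGroup (Fin 2) ≃* FreeGroup (Fin 2) :=
  MonoidHom.toMulEquiv (FreeGroup.lift ![(FreeGroup.of 0)⁻¹, FreeGroup.of 1])
    (FreeGroup.lift ![(FreeGroup.of 0)⁻¹, FreeGroup.of 1])
    (by apply FreeGroup.ext_hom; intro i; fin_cases i <;> simp)
    (by apply FreeGroup.ext_hom; intro i; fin_cases i <;> simp)

/-- Multiplying the second generator by the first. -/
def mulAut : FreeGroup (Fin 2) ≃* FreeGroup (Fin 2) :=
  MonoidHom.toMulEquiv (FreeGroup.lift ![FreeGroup.of 0, FreeGroup.of 0 * FreeGroup.of 1])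
    (FreeGroup.lift ![FreeGroup.of 0, (FreeGroup.of 0)⁻¹ * FreeGroup.of 1])
    (by apply FreeGroup.ext_hom; intro i; fin_cases i <;> simp)
    (by apply FreeGroup.ext_hom; intro i; fin_cases i <;> simp)

theorem nielsenClosed (hgen : Subgroup.closure {g, h} = ⊤) : NielsenClosed (NielsenEquiv g h) where
  swap H := H.move (FreeGroup.freeGroupCongr (Equiv.swap 0 1)) (by simp) (by simp)
  inv H := H.move invAut (by simp [invAut]) (by simp [invAut])
  mul H := H.move mulAut (by simp [mulAut]) (by simp [mulAut])
  conj x H := by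
    obtain ⟨w, rfl⟩ := surjective_lift (H.closure_eq hgen) x
    exact H.move (MulAut.conj w⁻¹) (by simp) (by simp)

/-- A homomorphism killing one entry of a generating pair has cyclic image. -/
theorem mem_zpowers_of_gen {H : Type*} [Group H] (q : G →* H)
    (hgen : Subgroup.closure {g, h} = ⊤) (hg : q g = 1) (x : G) : q x ∈ Subgroup.zpowers (q h) := by
  have hx : x ∈ Subgroup.closure {g, h} := by rw [hgen]; trivial
  have : Subgroup.closure {g, h} ≤ (Subgroup.zpowers (q h)).comap q := by
    rw [Subgroup.closure_le]
    rintro y (rfl | rfl)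
    · change q y ∈ Subgroup.zpowers (q h)
      rw [hg]; exact one_mem _
    · exact Subgroup.mem_zpowers _
  exact this hx

theorem comm_of_zpowers {H : Type*} [Group H] {x y z : H} (hx : x ∈ Subgroup.zpowers z)
    (hy : y ∈ Subgroup.zpowers z) : x * y = y * x := by
  obtain ⟨i, rfl⟩ := hx
  obtain ⟨j, rfl⟩ := hy
  exact ((Commute.refl z).zpow_zpow i j).eq

end nielsen

namespace EdgeTree

open TreeLength

/-- A subgroup `P` of the base group containing `C` and its conjugate by `b` gives, together with
the hyperbolic element `σ b`, an HNN extension whose base group is `P`, unless `b ∈ P`. -/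
theorem mem_of_gen {Γ : Type*} [Group Γ] (E : EdgeTree Γ) (P : Subgroup Γ) (hP : P ≤ E.base)
    (hCP : E.C ≤ P) {b : Γ} (hb : E.L b = 0) (hbC : ∀ c ∈ E.C, b⁻¹ * c * b ∈ P) (hbP : b ∉ P)
    {g : Γ} (hg : g ∈ Subgroup.closure ((P : Set Γ) ∪ {E.σ * b})) (hg0 : E.L g = 0) : g ∈ P := by
  have hb' : E.L b⁻¹ = 0 := by rw [E.len_inv, hb]
  refine E.hnn_base P hP (E.σ * b) (fun _ => 0) (by rw [len_mul_right hb, E.len_σ]; norm_num)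
    ?_ hg hg0
  intro ε δ p hp hne
  have lp : E.L p = 0 := hP hp
  suffices h : E.K (sgn (E.σ * b) (!ε)) (p * sgn (E.σ * b) δ) = 0 from ⟨h.le, h.le⟩
  by_contra hK
  have hi : (E.σ * b)⁻¹ = b⁻¹ * E.σ := by rw [mul_inv_rev, E.σ_inv]
  cases ε <;> cases δ <;> simp only [sgn, Bool.not_true, Bool.not_false, cond_true, cond_false,
    hi] at hK hne
  · have h1 : p * b⁻¹ ∈ E.C := by
      apply E.edge _ (by rw [len_mul_right hb', lp])
      rw [K_mul_right hb, ← mul_assoc] at hK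
      omega
    apply hbP
    have h2 := P.mul_mem (P.inv_mem (hCP h1)) hp
    simpa using h2
  · have h1 : p ∈ E.C := by
      apply E.edge _ lp
      rw [K_mul_right hb, ← mul_assoc, K_mul_right' hb] at hK
      omega
    apply hne trivial
    have h2 := hbC _ (E.conj_C _ h1)
    simpa only [mul_assoc] using h2
  · have h1 : b * p * b⁻¹ ∈ E.C := by
      apply E.edge _ (by rw [len_mul_right hb', len_mul_right lp, hb])
      rw [← K_mul_left hb, mul_inv_cancel_left] at hK
      simp only [mul_assoc] at hK ⊢
      omega
    apply hne trivial
    have h2 := hCP (E.conj_C _ h1)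
    simpa only [mul_assoc] using h2
  · have h1 : b * p ∈ E.C := by
      apply E.edge _ (by rw [len_mul_right lp, hb])
      rw [← mul_assoc, K_mul_right' hb, ← K_mul_left hb, mul_inv_cancel_left] at hK
      simp only [mul_assoc] at hK ⊢
      omega
    apply hbP
    have h2 := P.mul_mem (hCP h1) (P.inv_mem hp)
    simpa using h2

end EdgeTree

namespace Sph

open FreeProd

section quotients

variable {l : ℕ}

/-- `s₁, s₂ ↦ 1`, `s₃, s₄ ↦ 0`. -/
def χ : G l →* Multiplicative (ZMod 2) :=
  hom ![Multiplicative.ofAdd 1, Multiplicative.ofAdd 1, 1, 1] (by decide) (by decide) (by decide)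
    (one_pow _) (by decide)

theorem χ_s (i) : χ (s l i) = (![Multiplicative.ofAdd 1, Multiplicative.ofAdd 1, 1, 1] :
    Fin 4 → Multiplicative (ZMod 2)) i := hom_s l _ _ _ _ _ _ i

theorem χ_ι (b) : χ (ι l b) = 1 := by
  have : χ.comp (ι l) = 1 := by
    apply Monoid.Coprod.hom_ext
    · apply zmod_hom_ext
      change χ (ι l (gt _)) = 1
      rw [ι_gt, map_inv, χ_s]; rfl
    · apply zmod_hom_ext
      change χ (ι l (ga _)) = 1
      rw [ι_ga, χ_s]; rfl
  exact DFunLike.congr_fun this b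

/-- The elements of the base group and their conjugates are killed by `χ`, so a
generating pair cannot consist of two of them. -/
theorem not_both_base {f y : G l} (hgen : Subgroup.closure {f, y} = ⊤) {x : G l}
    (hf : (tree l).L f = 0) (hy : (tree l).L (x⁻¹ * y * x) = 0) : False := by
  obtain ⟨b, rfl⟩ := (tree_base l).1 hf
  obtain ⟨b', hb'⟩ := (tree_base l).1 hy
  have hy1 : χ y = 1 := by
    have h1 := χ_ι b'
    rw [hb'] at h1
    simpa using h1
  have h2 := mem_zpowers_of_gen χ hgen (χ_ι b) (s l 0)
  rw [hy1, Subgroup.zpowers_one_eq_bot, Subgroup.mem_bot, χ_s] at h2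
  exact absurd h2 (by decide)

theorem sr_sq {n : ℕ} (i : ZMod n) : (DihedralGroup.sr i) ^ 2 = 1 := by
  rw [pow_two, DihedralGroup.sr_mul_sr, sub_self, DihedralGroup.r_zero]

theorem r_neg_pow (n : ℕ) : (DihedralGroup.r (-1) : DihedralGroup n) ^ n = 1 := by
  rw [DihedralGroup.r_pow, neg_mul, one_mul, ZMod.natCast_self, neg_zero, DihedralGroup.r_zero]

/-- The dihedral quotient killing `s₁`. -/
def q0 : G l →* DihedralGroup (2 * l + 1) :=
  hom ![1, .sr 0, .sr 1, .r (-1)] (one_pow 2) (sr_sq _) (sr_sq _) (r_neg_pow _) (by simp)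

theorem q0_s (i) : q0 (s l i) = (![1, .sr 0, .sr 1, .r (-1)] :
    Fin 4 → DihedralGroup (2 * l + 1)) i := hom_s l _ _ _ _ _ _ i

/-- The dihedral quotient killing `s₂`. -/
def q1 : G l →* DihedralGroup (2 * l + 1) :=
  hom ![.sr 0, 1, .sr 1, .r (-1)] (sr_sq _) (one_pow 2) (sr_sq _) (r_neg_pow _) (by simp)

theorem q1_s (i) : q1 (s l i) = (![.sr 0, 1, .sr 1, .r (-1)] :
    Fin 4 → DihedralGroup (2 * l + 1)) i := hom_s l _ _ _ _ _ _ i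

theorem two_ne (hl : 1 ≤ l) : (2 : ZMod (2 * l + 1)) ≠ 0 := by
  intro h
  have h2 : ((2 : ℕ) : ZMod (2 * l + 1)) = 0 := by exact_mod_cast h
  rw [ZMod.natCast_eq_zero_iff] at h2
  have := Nat.le_of_dvd (by norm_num) h2
  omega

theorem not_comm (hl : 1 ≤ l) : (.sr 1 * .r (-1) : DihedralGroup (2 * l + 1)) ≠ .r (-1) * .sr 1 := by
  simp
  intro h
  apply two_ne hl
  linear_combination -h

/-- An entry of a generating pair does not invert an edge: `s₁c^i` dies in the dihedral quotient
killing `s₁` or the one killing `s₂`, according to the parity of `i`. -/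
theorem not_flip (hl : 1 ≤ l) {f y : G l} (hgen : Subgroup.closure {f, y} = ⊤) {x c : G l}
    (hc : c ∈ (tree l).C) (hf : x⁻¹ * f * x = s l 0 * c) : False := by
  have hs : ∀ q : G l →* DihedralGroup (2 * l + 1), q (s l 0 * c) = 1 → q (s l 2) = .sr 1 →
      q (s l 3) = .r (-1) → False := by
    intro q h1 h2 h3
    have hqf : q f = 1 := by
      have hf' : f = x * (s l 0 * c) * x⁻¹ := by rw [← hf]; group
      rw [hf', map_mul, map_mul, h1, mul_one, ← map_mul, mul_inv_cancel, map_one]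
    have h4 := comm_of_zpowers (mem_zpowers_of_gen q hgen hqf (s l 2))
      (mem_zpowers_of_gen q hgen hqf (s l 3))
    rw [h2, h3] at h4
    exact not_comm hl h4
  rw [tree_C] at hc
  obtain ⟨i, rfl⟩ := hc
  rcases Int.even_or_odd' i with ⟨k, rfl | rfl⟩
  · refine hs q0 ?_ (q0_s 2) (q0_s 3)
    simp only [map_mul, map_zpow, q0_s, zpow_mul]
    change 1 * ((1 * DihedralGroup.sr 0) ^ (2 : ℤ)) ^ k = 1
    rw [one_mul, one_mul, zpow_ofNat, sr_sq, one_zpow]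
  · refine hs q1 ?_ (q1_s 2) (q1_s 3)
    simp only [map_mul, map_zpow, q1_s, zpow_add, zpow_mul, zpow_one]
    change DihedralGroup.sr 0 * (((DihedralGroup.sr 0 * 1) ^ (2 : ℤ)) ^ k *
      (DihedralGroup.sr 0 * 1)) = 1
    rw [mul_one, zpow_ofNat, sr_sq, one_zpow, one_mul, ← pow_two, sr_sq]

theorem base_not_cyclic (hl : 1 ≤ l) (f : G l) :
    ∃ b, (tree l).L b = 0 ∧ b ∉ Subgroup.zpowers f := by
  by_contra hcon
  push Not at hcon
  have h2 := hcon (s l 2) ((tree_base l).2 ⟨ga _, ι_ga l⟩)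
  have h3 := hcon (s l 3) ((tree_base l).2 ⟨(gt _)⁻¹, by rw [map_inv, ι_gt, inv_inv]⟩)
  have h4 := congrArg q0 (comm_of_zpowers h2 h3)
  rw [map_mul, map_mul, q0_s, q0_s] at h4
  exact not_comm hl h4

theorem s2_ne_one : s l 2 ≠ 1 := by
  intro h
  have h1 := congrArg q0 h
  rw [map_one, q0_s] at h1
  cases h1

/-- The quotient onto the Klein four group. -/
def q4 : G l →* Multiplicative (ZMod 2 × ZMod 2) :=
  hom ![Multiplicative.ofAdd (1, 0), Multiplicative.ofAdd (0, 1), Multiplicative.ofAdd (1, 1), 1]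
    (by decide) (by decide) (by decide) (one_pow _) (by decide)

theorem q4_s (i) : q4 (s l i) = (![Multiplicative.ofAdd (1, 0), Multiplicative.ofAdd (0, 1),
    Multiplicative.ofAdd (1, 1), 1] : Fin 4 → Multiplicative (ZMod 2 × ZMod 2)) i :=
  hom_s l _ _ _ _ _ _ i

/-- An even power of `s₁s₂` dies in the Klein four quotient, which is not cyclic. -/
theorem not_even {k : ℤ} (hk : Even k) {y : G l}
    (hgen : Subgroup.closure {(s l 0 * s l 1) ^ k, y} = ⊤) : False := by
  have h1 : q4 ((s l 0 * s l 1) ^ k) = 1 := by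
    obtain ⟨m, rfl⟩ := hk
    rw [← two_mul, zpow_mul, map_zpow, map_zpow, map_mul, q4_s, q4_s]
    convert one_zpow m
    decide
  have key : ∀ v x : Multiplicative (ZMod 2 × ZMod 2), x ∈ Subgroup.zpowers v → x = 1 ∨ x = v := by
    rintro v x ⟨i, rfl⟩
    have hv : v ^ (2 : ℤ) = 1 := by revert v; decide
    rcases Int.even_or_odd' i with ⟨k, rfl | rfl⟩
    · left; simp only [zpow_mul, hv, one_zpow]
    · right; simp only [zpow_add, zpow_mul, hv, one_zpow, one_mul, zpow_one]
  have a0 := key _ _ (mem_zpowers_of_gen q4 hgen h1 (s l 0))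
  have a1 := key _ _ (mem_zpowers_of_gen q4 hgen h1 (s l 1))
  generalize q4 y = v at a0 a1
  rw [q4_s] at a0 a1
  revert v
  decide

end quotients

end Sph

/-! ### A projective representation killing a power of `s₁s₂` -/

section matrices

open Matrix

/-- A matrix annihilated by a polynomial with distinct roots `η`, `η⁻¹` satisfies `M ^ n = 1`
whenever `η ^ n = 1`. -/
theorem Matrix.pow_eq_one_of_quadratic {M : Matrix (Fin 2) (Fin 2) ℂ} {η θ : ℂ} (hηθ : η * θ = 1)
    (hne : η ≠ θ) (hM : M * M = (η + θ) • M - 1) {n : ℕ} (hη : η ^ n = 1) : M ^ n = 1 := by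
  have key : ∀ m : ℕ, (η - θ) • M ^ m = (η ^ m - θ ^ m) • M - (η ^ m * θ - θ ^ m * η) • 1 := by
    intro m
    induction m with
    | zero => simp [← neg_smul]
    | succ m ih =>
      rw [pow_succ, ← smul_mul_assoc, ih, sub_mul, smul_mul_assoc, hM, smul_mul_assoc, one_mul]
      have e1 : η ^ (m + 1) * θ = η ^ m := by rw [pow_succ, mul_assoc, hηθ, mul_one]
      have e2 : θ ^ (m + 1) * η = θ ^ m := by rw [pow_succ, mul_assoc, mul_comm θ, hηθ, mul_one]
      rw [e1, e2]
      module
  have hθ : θ ^ n = 1 := by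
    have := congrArg (· ^ n) hηθ
    simpa [mul_pow, hη] using this
  have h := key n
  rw [hη, hθ, sub_self, zero_smul, zero_sub, one_mul, one_mul, ← neg_smul, neg_sub] at h
  exact smul_right_injective _ (sub_ne_zero.2 hne) h

namespace Sph

section projective

variable {ω p : ℂ}

/-- The involution exchanging the two coordinates. -/
def mW : (Matrix (Fin 2) (Fin 2) ℂ)ˣ :=
  ⟨!![0, 1; 1, 0], !![0, 1; 1, 0], by simp [one_fin_two], by simp [one_fin_two]⟩

/-- The diagonal matrix with entries `ω`, `ω⁻¹`. -/
noncomputable def mZ (hω : ω ≠ 0) : (Matrix (Fin 2) (Fin 2) ℂ)ˣ :=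
  ⟨!![ω, 0; 0, ω⁻¹], !![ω⁻¹, 0; 0, ω], by simp [one_fin_two, hω], by simp [one_fin_two, hω]⟩

/-- A matrix of trace `0` and determinant `1`. -/
def mX (p : ℂ) : (Matrix (Fin 2) (Fin 2) ℂ)ˣ :=
  ⟨!![p, 1; -1 - p ^ 2, -p], !![-p, -1; 1 + p ^ 2, p],
    by simp [one_fin_two]; ring_nf; simp, by simp [one_fin_two]; ring_nf; simp⟩

theorem mW_sq : mW ^ 2 = 1 := by
  ext1; simp [mW, pow_two, one_fin_two]

theorem mWZ_sq (hω : ω ≠ 0) : (mW * mZ hω) ^ 2 = 1 := by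
  ext1; simp [mW, mZ, pow_two, one_fin_two, hω]

theorem mX_sq : (mX p) ^ 2 = -1 := by
  ext1; simp [mX, pow_two, one_fin_two]; ring_nf

theorem mZ_pow (hω : ω ≠ 0) (m : ℕ) (h : ω ^ m = 1) : (mZ hω) ^ m = 1 := by
  have key : ∀ m : ℕ, !![ω, 0; 0, ω⁻¹] ^ m = !![ω ^ m, 0; 0, ω⁻¹ ^ m] := by
    intro m
    induction m with
    | zero => simp [one_fin_two]
    | succ m ih => rw [pow_succ, ih]; simp [pow_succ]
  ext1
  rw [Units.val_pow_eq_pow_val]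
  change !![ω, 0; 0, ω⁻¹] ^ m = 1
  rw [key, inv_pow, h, inv_one, one_fin_two]

/-- The matrix `Z X` has determinant one and trace `p (ω - ω⁻¹) = η + η⁻¹`. -/
theorem mZX_pow (hω : ω ≠ 0) {η : ℂ} (hη0 : η ≠ 0) (hη : η ≠ η⁻¹)
    (hp : p * (ω - ω⁻¹) = η + η⁻¹) {n : ℕ} (hn : η ^ n = 1) : (mZ hω * mX p) ^ n = 1 := by
  ext1
  rw [Units.val_pow_eq_pow_val]
  apply pow_eq_one_of_quadratic (mul_inv_cancel₀ hη0) hη _ hn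
  rw [← hp]
  have hi : ω * ω⁻¹ = 1 := mul_inv_cancel₀ hω
  generalize hv : ω⁻¹ = v at hi
  simp only [mZ, mX, Units.val_mul, hv]
  ext i j
  fin_cases i <;> fin_cases j <;> simp [one_fin_two]
  · linear_combination -hi
  · ring
  · ring
  · linear_combination -hi

/-- If the conjugations by `W` and `Z` commute, then `ω⁴ = 1`; it suffices to compare their values on
a transvection. -/
theorem mZ_comm (hω : ω ≠ 0)
    (h : MulAut.conj mW * MulAut.conj (mZ hω) = MulAut.conj (mZ hω) * MulAut.conj mW) :
    ω ^ 4 = 1 := by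
  let U : (Matrix (Fin 2) (Fin 2) ℂ)ˣ :=
    ⟨!![1, 1; 0, 1], !![1, -1; 0, 1], by simp [one_fin_two], by simp [one_fin_two]⟩
  have h1 := congrArg Units.val (DFunLike.congr_fun h U)
  have h2 := congrFun (congrFun h1 1) 0
  simp [U, mW, mZ, MulAut.conj] at h2
  field_simp at h2
  linear_combination h2

end projective

/-- A power `(s₁s₂)^k` with `k` odd and `|k| ≥ 3` is no entry of a generating pair: the assignment
`s₁ ↦ W`, `s₂ ↦ W Z`, `s₃ ↦ X`, `s₄ ↦ (Z X)⁻¹` to projective classes, with `ω` of order `|k|`, kills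
`(s₁s₂)^k` and has noncommutative image. The group `PGL₂(ℂ)` is encoded by the inner automorphisms of
the unit group of the matrix ring. -/
theorem not_odd {l : ℕ} (hl : 1 ≤ l) {k : ℤ} (hk : Odd k) (h1 : k ≠ 1) (h2 : k ≠ -1) {y : G l}
    (hgen : Subgroup.closure {(s l 0 * s l 1) ^ k, y} = ⊤) : False := by
  obtain ⟨m, hm⟩ := hk.natAbs
  have hm1 : 1 ≤ m := by omega
  have hω := Complex.isPrimitiveRoot_exp k.natAbs (by omega)
  generalize Complex.exp _ = ω at hω
  have hη := Complex.isPrimitiveRoot_exp (2 * l + 1) (by omega)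
  generalize Complex.exp _ = η at hη
  have hω0 : ω ≠ 0 := hω.ne_zero (by omega)
  have hη0 : η ≠ 0 := hη.ne_zero (by omega)
  have sq : ∀ {z : ℂ} {n : ℕ}, 1 ≤ n → IsPrimitiveRoot z (2 * n + 1) → z ≠ 0 → z ≠ z⁻¹ := by
    intro z n hn hz h0 h
    have h3 : z ^ 2 = 1 := by rw [pow_two]; nth_rw 2 [h]; exact mul_inv_cancel₀ h0
    have := Nat.le_of_dvd (by norm_num) (hz.dvd_of_pow_eq_one 2 h3)
    omega
  have hωi := sq hm1 (hm ▸ hω) hω0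
  have hηi := sq hl hη hη0
  have hp : (η + η⁻¹) / (ω - ω⁻¹) * (ω - ω⁻¹) = η + η⁻¹ :=
    div_mul_cancel₀ _ (sub_ne_zero.2 hωi)
  generalize (η + η⁻¹) / (ω - ω⁻¹) = p at hp
  let x : Fin 4 → MulAut ((Matrix (Fin 2) (Fin 2) ℂ)ˣ) :=
    ![MulAut.conj mW, MulAut.conj (mW * mZ hω0), MulAut.conj (mX p),
      MulAut.conj (mZ hω0 * mX p)⁻¹]
  have e0 : x 0 ^ 2 = 1 := by
    change MulAut.conj mW ^ 2 = 1
    rw [← map_pow, mW_sq, map_one]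
  have e1 : x 1 ^ 2 = 1 := by
    change MulAut.conj (mW * mZ hω0) ^ 2 = 1
    rw [← map_pow, mWZ_sq, map_one]
  have e2 : x 2 ^ 2 = 1 := by
    change MulAut.conj (mX p) ^ 2 = 1
    rw [← map_pow, mX_sq]
    ext1 u
    simp [MulAut.conj_apply]
  have e3 : x 3 ^ (2 * l + 1) = 1 := by
    change MulAut.conj (mZ hω0 * mX p)⁻¹ ^ (2 * l + 1) = 1
    rw [← map_pow, inv_pow, mZX_pow hω0 hη0 hηi hp hη.pow_eq_one, inv_one, map_one]
  have ec : x 0 * x 1 = MulAut.conj (mZ hω0) := by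
    change MulAut.conj mW * MulAut.conj (mW * mZ hω0) = _
    rw [← map_mul, ← mul_assoc, ← pow_two, mW_sq, one_mul]
  have e4 : x 0 * x 1 * x 2 * x 3 = 1 := by
    rw [ec]
    change MulAut.conj (mZ hω0) * MulAut.conj (mX p) * MulAut.conj (mZ hω0 * mX p)⁻¹ = 1
    rw [← map_mul, ← map_mul, mul_inv_cancel, map_one]
  let q := hom (l := l) x e0 e1 e2 e3 e4
  have q0' : q (s l 0) = x 0 := hom_s l _ _ _ _ _ _ 0
  have qc : q (s l 0 * s l 1) = MulAut.conj (mZ hω0) := by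
    rw [map_mul, q0', ← ec]
    exact congrArg (x 0 * ·) (hom_s l x e0 e1 e2 e3 e4 1)
  have hq1 : q ((s l 0 * s l 1) ^ k) = 1 := by
    have h3 : MulAut.conj (mZ hω0) ^ k.natAbs = 1 := by
      rw [← map_pow, mZ_pow hω0 _ hω.pow_eq_one, map_one]
    rw [map_zpow, qc]
    rcases Int.natAbs_eq k with h | h
    · rw [h, zpow_natCast, h3]
    · rw [h, _root_.zpow_neg, zpow_natCast, h3, inv_one]
  have h3 := comm_of_zpowers (mem_zpowers_of_gen q hgen hq1 (s l 0))
    (mem_zpowers_of_gen q hgen hq1 (s l 0 * s l 1))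
  rw [q0', qc] at h3
  have h4 := hω.dvd_of_pow_eq_one 4 (mZ_comm hω0 h3)
  -- the order of `ω` is odd and at least three
  have h5 : k.natAbs ≤ 4 := Nat.le_of_dvd (by norm_num) h4
  have h6 : k.natAbs = 3 := by omega
  rw [h6] at h4
  omega

end Sph

end matrices


/-! ### Normalising generating pairs -/

namespace Sph

open FreeProd

variable {l : ℕ} (hl : 1 ≤ l) {N : G l → G l → Prop} (hN : NielsenClosed N)
  (hgen : ∀ f y, N f y → Subgroup.closure {f, y} = ⊤)
include hl hN hgen

/-- Every Nielsen class of generating pairs contains a pair whose first entry lies in the base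
group: a class all of whose entries are hyperbolic would consist of bases of a free group acting
freely on the tree, and no entry can invert an edge. -/
theorem exists_base (hne : ∃ f y, N f y) : ∃ f y, N f y ∧ (tree l).L f = 0 := by
  by_cases hyp : ∀ f y, N f y → 2 * (tree l).K f f⁻¹ < (tree l).L f
  · obtain ⟨f, y, hfy, hpos⟩ := (tree l).exists_free hN hne hyp
    obtain ⟨w, hw⟩ := surjective_lift (hgen f y hfy) (s l 2)
    have hw1 : w ≠ 1 := by
      rintro rfl
      rw [map_one] at hw
      exact s2_ne_one hw.symm
    have h1 := hpos w hw1
    rw [hw, (tree_base l).2 ⟨ga _, ι_ga l⟩] at h1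
    exact absurd h1 (lt_irrefl _)
  · push Not at hyp
    obtain ⟨f, y, hfy, hle⟩ := hyp
    rcases (tree l).elliptic _ f rfl hle with ⟨x, hx⟩ | ⟨x, c, hc, hx⟩
    · exact ⟨_, _, hN.conj x hfy, hx⟩
    · exact (not_flip hl (hgen f y hfy) hc hx).elim

/-- Every Nielsen class of generating pairs contains a pair `(s₁s₂, s₁b)` with `b` in the base
group and not in the edge group. -/
theorem exists_edge (hne : ∃ f y, N f y) :
    ∃ b, ι l b ∉ (tree l).C ∧ N (s l 0 * s l 1) (s l 0 * ι l b) := by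
  obtain ⟨f, b, hf, -, hb, hbC, hfb⟩ := (tree l).exists_edge_pair (tree_malnormal hl) hN hgen
    (by
      intro f y hfy hf
      by_contra hle
      rcases (tree l).elliptic _ y rfl (not_lt.1 hle) with ⟨x, hx⟩ | ⟨x, c, hc, hx⟩
      · exact not_both_base (hgen f y hfy) hf hx
      · exact not_flip hl (hgen y f (hN.swap hfy)) hc hx)
    (base_not_cyclic hl) (exists_base hl hN hgen hne)
  obtain ⟨b, rfl⟩ := (tree_base l).1 hb
  rw [tree_C] at hf
  obtain ⟨k, rfl⟩ := hf
  refine ⟨b, hbC, ?_⟩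
  have hfb' : N ((s l 0 * s l 1) ^ k) (s l 0 * ι l b) := hfb
  rcases Int.even_or_odd k with hk | hk
  · exact (not_even hk (hgen _ _ hfb')).elim
  by_cases h1 : k = 1
  · rwa [h1, zpow_one] at hfb'
  by_cases h2 : k = -1
  · have := hN.inv hfb'
    rwa [h2, zpow_neg_one, inv_inv] at this
  · exact (not_odd hl hk h1 h2 (hgen _ _ hfb')).elim

omit hN in
/-- Generation forces `b ∈ ⟨c⟩ s₃ ⟨c⟩`, where `c = s₁s₂`. -/
theorem double_coset {b : Z2 (2 * l + 1)} (hbC : ι l b ∉ (tree l).C)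
    (hb : N (s l 0 * s l 1) (s l 0 * ι l b)) :
    ∃ i j : ℤ, b = gc l ^ i * ga _ * gc l ^ j := by
  by_contra hcon
  push Not at hcon
  have h1 : b ∉ Subgroup.zpowers (gc l) := fun h => hbC ⟨b, h, rfl⟩
  have h2 := Z2_not_mem (n := 2 * l + 1) (by omega) h1 hcon
  set P₀ : Subgroup (Z2 (2 * l + 1)) := Subgroup.closure {gc l, b⁻¹ * gc l * b} with hP₀
  have c0 : gc l ∈ P₀ := Subgroup.subset_closure (by simp)
  have c1 : b⁻¹ * gc l * b ∈ P₀ := Subgroup.subset_closure (by simp)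
  have hnot : ι l b ∉ P₀.map (ι l) := by
    rintro ⟨b', hb', he⟩
    exact h2 (ι_injective hl he ▸ hb')
  apply hnot
  have hCP : (tree l).C ≤ P₀.map (ι l) :=
    Subgroup.map_mono ((Subgroup.zpowers_le).2 c0)
  have hb0 : (tree l).L (ι l b) = 0 := (tree_base l).2 ⟨b, rfl⟩
  refine (tree l).mem_of_gen (P₀.map (ι l)) ?_ hCP hb0 ?_ hnot ?_ hb0
  · rintro _ ⟨b', -, rfl⟩
    exact (tree_base l).2 ⟨b', rfl⟩
  · rintro _ ⟨c, ⟨i, rfl⟩, rfl⟩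
    refine ⟨b⁻¹ * gc l ^ i * b, ?_, by rw [map_mul, map_mul, map_inv]; rfl⟩
    have h3 := P₀.zpow_mem c1 i
    have h4 : b⁻¹ * gc l ^ i * b = (b⁻¹ * gc l * b) ^ i := by
      have := conj_zpow (a := b⁻¹) (b := gc l) (i := i)
      simpa using this.symm
    rw [h4]; exact h3
  · have htop : (⊤ : Subgroup (G l)) ≤
        Subgroup.closure ((P₀.map (ι l) : Set (G l)) ∪ {(tree l).σ * ι l b}) := by
      rw [← hgen _ _ hb, Subgroup.closure_le]
      rintro x (rfl | rfl)
      · exact Subgroup.subset_closure (Or.inl ⟨gc l, c0, ι_gc l⟩)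
      · exact Subgroup.subset_closure (Or.inr rfl)
    exact htop trivial

/-- Since `s₁` inverts `c = s₁s₂`, the powers of `c` in `s₁c^i s₃ c^j` can be moved to the outside
and removed by Nielsen moves. -/
theorem reaches (hne : ∃ f y, N f y) : N (s l 0 * s l 1) (s l 0 * s l 2) := by
  obtain ⟨b, hbC, hb⟩ := exists_edge hl hN hgen hne
  obtain ⟨i, j, rfl⟩ := double_coset hl hgen hbC hb
  set c := s l 0 * s l 1 with hc
  have hinv : s l 0 * c * (s l 0)⁻¹ = c⁻¹ := by
    rw [hc, mul_inv_rev, s1_inv, s0_inv, ← mul_assoc, s0_sq, one_mul]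
  have hflip : s l 0 * c ^ i = c ^ (-i) * s l 0 := by
    rw [zpow_neg, ← inv_zpow, ← hinv, conj_zpow, inv_mul_cancel_right]
  rw [map_mul, map_mul, map_zpow, map_zpow, ι_gc, ι_ga, ← hc, mul_assoc (c ^ i), ← mul_assoc,
    hflip, mul_assoc] at hb
  have h1 := hN.zpow_mul hb (Subgroup.zpow_mem_zpowers c i)
  rw [← mul_assoc, ← zpow_add, add_neg_cancel, zpow_zero, one_mul] at h1
  have h2 := hN.inv_right (hN.zpow_mul (hN.inv_right h1) (Subgroup.zpow_mem_zpowers c j))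
  rw [mul_inv_rev, inv_inv, ← mul_assoc, mul_inv_cancel_right] at h2
  exact h2

end Sph

theorem stmt8 (l : ℕ) (hl : 1 ≤ l)
    (g h : PresentedGroup (sphRels l))
    (hgen : Subgroup.closure {g, h} = ⊤) :
    NielsenEquiv g h
      ((PresentedGroup.of 0 : PresentedGroup (sphRels l)) * PresentedGroup.of 1)
      ((PresentedGroup.of 0 : PresentedGroup (sphRels l)) * PresentedGroup.of 2) :=
  Sph.reaches hl (nielsenClosed hgen) (fun _ _ H => H.closure_eq hgen) ⟨g, h, NielsenEquiv.rfl'⟩
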